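/- arXiv:1205.5093 — 6 statements merged into one kernel-verified Lean document; each statement's English description precedes it below -/
import Mathlib

section
/- Let ω = (ω₁,ω₂,ω₃) ∈ ℝ³ with ωᵢ > 0 for each i, and set α = ω₂/ω₁, β = ω₃/ω₁. Suppose 1, α, β are linearly independent over ℚ and also 1, α⁻¹, β⁻¹ are linearly independent over ℚ. Then p(n,ω) = n² + n + 1 for every integer n ≥ 0. -/
/-!
Write `a i = 1 / ω i` for the time between two crossings of family `i`. The future of the ray depends
only on the vector `z` of last crossing times, taken up to a common translation. For a word `w` the
states from which `w` is read form an open convex set (`Feas a w`), and the proof counts the words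
for which this set is nonempty.

A word `w` can be preceded by the letter `l` iff some state of `w` has `z l` strictly largest. The
three regions where a given coordinate is largest are sectors of the plane `ℝ³ / ℝ(1,1,1)`, separated
by three arms (two coordinates equal and larger than the third) which meet at the centre. For a
convex open set the numbers of sectors, arms and centres met satisfy `S - A + C = 1`
(`sector_count`). Exactly one word of each length contains the centre, so summing over words of
length `n` gives `p(n+1) + 1 = p(n) + A(n)`, with `A(n)` the number of pairs (word, arm) that meet.

An arm is a half line, and on it a word corresponds to an interval. When the length grows by one,
an interval is split exactly by a starting point for which two families become due simultaneously
(`arm_extensions`). Linear independence of the `a i` over `ℚ` shows that such a tie happens at the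
same counts as on the orbit of the corner, so there is exactly one on two of the arms and none on the
third (`tie_count`). Hence `A(n+1) = A(n) + 2`, `A(n) = 2 n + 3` (`arm_count`) and
`p(n) = n² + n + 1` (`word_count`).

Every factor of a cutting sequence is a word with a nonempty set of states (`feas_factor`), which
bounds the complexity above. For the lower bound the origin is admissible, and since `1, α, β` are
independent over `ℚ`, Kronecker's theorem (`kronecker_two`) makes its orbit dense in the torus; it
therefore visits each of the open sets of states, so every such word is a factor (`complexity_ge`).
-/

open Filter Topology

/-- Coordinate `i` of `m + t • ω` is an integer at time `t`. -/
def crossingAt (m ω : Fin 3 → ℝ) (t : ℝ) (i : Fin 3) : Prop :=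
  ∃ k : ℤ, m i + t * ω i = (k : ℝ)

/-- `m` is admissible for `ω`: the ray `{m + tω : t > 0}` contains no point with
two or more integer coordinates. -/
def Admissible (m ω : Fin 3 → ℝ) : Prop :=
  ∀ t : ℝ, 0 < t → ∀ i j : Fin 3, crossingAt m ω t i → crossingAt m ω t j → i = j

/-- `u` is the cutting sequence (billiard word) of the ray from `m` in direction `ω`:
there is an increasing enumeration `t` of all crossing times, and `u n` records the
index of the coordinate which is an integer at time `t n`. -/
def IsCuttingSeq (m ω : Fin 3 → ℝ) (u : ℕ → Fin 3) : Prop :=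
  ∃ t : ℕ → ℝ, StrictMono t ∧ (∀ n, 0 < t n) ∧
    (∀ s : ℝ, 0 < s → ((∃ i, crossingAt m ω s i) ↔ ∃ n, t n = s)) ∧
    (∀ n, crossingAt m ω (t n) (u n))

/-- Factor complexity of an infinite word: number of distinct factors of length `n`. -/
noncomputable def complexity (u : ℕ → Fin 3) (n : ℕ) : ℕ :=
  Set.ncard {w : Fin n → Fin 3 | ∃ k : ℕ, ∀ j : Fin n, w j = u (k + (j : ℕ))}

/-- `p(n, ω)`: supremum over admissible points of the complexity of the billiard word. -/
noncomputable def pDir (ω : Fin 3 → ℝ) (n : ℕ) : ℕ :=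
  sSup {c : ℕ | ∃ m u, Admissible m ω ∧ IsCuttingSeq m ω u ∧ c = complexity u n}

/-- `s(n, ω) = p(n+1, ω) - p(n, ω)`. -/
noncomputable def sDir (ω : Fin 3 → ℝ) (n : ℕ) : ℤ :=
  (pDir ω (n + 1) : ℤ) - (pDir ω n : ℤ)

/-- A point with at least two integer coordinates. -/
def IsCornerPt (x : Fin 3 → ℝ) : Prop :=
  ∃ i j : Fin 3, i ≠ j ∧ (∃ k : ℤ, x i = (k : ℝ)) ∧ (∃ k : ℤ, x j = (k : ℝ))

/-- `N(n, ω)`: the number (up to translation by `ℤ³`, i.e. counted with the starting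
point normalized in `[0,1)³`) of open segments of direction `ω` whose endpoints both
have at least two integer coordinates, crossing exactly `n` integer coordinate
hyperplanes strictly between their endpoints. -/
noncomputable def NDiag (ω : Fin 3 → ℝ) (n : ℕ) : ℕ :=
  Set.ncard {pt : (Fin 3 → ℝ) × ℝ |
    (∀ i, pt.1 i ∈ Set.Ico (0 : ℝ) 1) ∧ 0 < pt.2 ∧
    IsCornerPt pt.1 ∧ IsCornerPt (fun i => pt.1 i + pt.2 * ω i) ∧
    Set.ncard {q : Fin 3 × ℝ | 0 < q.2 ∧ q.2 < pt.2 ∧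
      ∃ k : ℤ, pt.1 q.1 + q.2 * ω q.1 = (k : ℝ)} = n}

namespace CubeBilliard

/-! ### Words with prescribed last crossing times -/

/-- A vector `z` of last crossing times is consistent with the periods `a` when every face family
has been crossed before any of them is due to be crossed again. -/
def Consistent (a z : Fin 3 → ℝ) : Prop := ∀ i j, z i < z j + a j

/-- `Feas a w z`: starting from the last crossing times `z`, the upcoming crossings spell the
word `w`, without passing through two faces at once. -/
def Feas (a : Fin 3 → ℝ) : List (Fin 3) → (Fin 3 → ℝ) → Prop
  | [], z => Consistent a z
  | l :: w, z => Consistent a z ∧ Feas a w (z + Pi.single l (a l))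

/-- The last crossing times after `D i` further crossings of each family `i`. -/
def st (a z : Fin 3 → ℝ) (D : Fin 3 → ℕ) : Fin 3 → ℝ := fun i => z i + D i * a i

/-- The number of occurrences of each letter in a word. -/
def cnt (w : List (Fin 3)) : Fin 3 → ℕ := fun i => w.count i

theorem cnt_nil : cnt [] = 0 := by ext i; simp [cnt]

theorem cnt_cons (l : Fin 3) (w : List (Fin 3)) : cnt (l :: w) = cnt w + Pi.single l 1 := by
  ext i
  by_cases h : i = l
  · subst h; simp [cnt]
  · simp [cnt, h, Ne.symm h]

theorem cnt_append (w : List (Fin 3)) (l : Fin 3) :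
    cnt (w ++ [l]) = cnt w + Pi.single l 1 := by
  ext i
  by_cases h : i = l
  · subst h; simp [cnt]
  · simp [cnt, h, Ne.symm h]

theorem sum_cnt (w : List (Fin 3)) : ∑ i, cnt w i = w.length := by
  induction w with
  | nil => simp [cnt_nil]
  | cons l w ih =>
    rw [cnt_cons]
    simp only [Pi.add_apply, Finset.sum_add_distrib, ih, List.length_cons]
    simp

theorem st_zero (a z : Fin 3 → ℝ) : st a z 0 = z := by ext i; simp [st]

theorem st_add_single (a z : Fin 3 → ℝ) (D : Fin 3 → ℕ) (l : Fin 3) :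
    st a z (D + Pi.single l 1) = st a z D + Pi.single l (a l) := by
  ext i
  by_cases h : i = l
  · subst h; simp [st]; ring
  · simp [st, h]

theorem st_single_add (a z : Fin 3 → ℝ) (D : Fin 3 → ℕ) (l : Fin 3) :
    st a (z + Pi.single l (a l)) D = st a z (D + Pi.single l 1) := by
  ext i
  by_cases h : i = l
  · subst h; simp [st]; ring
  · simp [st, h]

theorem Feas.consistent {a : Fin 3 → ℝ} {w : List (Fin 3)} {z : Fin 3 → ℝ} (h : Feas a w z) :
    Consistent a z := by
  cases w with
  | nil => exact h
  | cons l w => exact h.1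

theorem feas_append {a : Fin 3 → ℝ} {l : Fin 3} (w : List (Fin 3)) (z : Fin 3 → ℝ) :
    Feas a (w ++ [l]) z ↔ Feas a w z ∧ Consistent a (st a z (cnt (w ++ [l]))) := by
  induction w generalizing z with
  | nil =>
    simp only [List.nil_append, Feas]
    rw [show cnt [l] = 0 + Pi.single l 1 by rw [cnt_cons, cnt_nil], st_add_single, st_zero]
  | cons k w ih =>
    simp only [List.cons_append, Feas, ih, st_single_add, cnt_cons, and_assoc]

theorem Feas.st {a : Fin 3 → ℝ} {w : List (Fin 3)} {z : Fin 3 → ℝ} (h : Feas a w z) :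
    Consistent a (st a z (cnt w)) := by
  induction w generalizing z with
  | nil => rw [cnt_nil, st_zero]; exact h
  | cons l w ih => rw [cnt_cons, ← st_single_add]; exact ih h.2

/-- A consistent state stays consistent after a crossing of family `l` iff `l` is strictly the
first to be due. -/
theorem consistent_bump {a z : Fin 3 → ℝ} (ha : ∀ i, 0 < a i) (hz : Consistent a z) (l : Fin 3) :
    Consistent a (z + Pi.single l (a l)) ↔ ∀ j, j ≠ l → z l + a l < z j + a j := by
  constructor
  · intro h j hj
    simpa [hj] using h l j
  · intro h i j
    by_cases hi : i = l <;> by_cases hj : j = l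
    · subst hi; subst hj; simp; exact ha _
    · subst hi; simpa [hj] using h j hj
    · subst hj; simp [hi]; linarith [hz i j, ha j]
    · simpa [hi, hj] using hz i j

/-- Read backwards: a word can be preceded by `l` iff family `l` is strictly the last crossed. -/
theorem feas_cons_iff {a : Fin 3 → ℝ} (ha : ∀ i, 0 < a i) (l : Fin 3) (w : List (Fin 3)) :
    (∃ z, Feas a (l :: w) z) ↔ ∃ z, Feas a w z ∧ ∀ i, i ≠ l → z i < z l := by
  constructor
  · rintro ⟨z, hz, hw⟩
    refine ⟨_, hw, fun i hi => ?_⟩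
    simpa [hi] using hz i l
  · rintro ⟨z, hz, hl⟩
    refine ⟨z - Pi.single l (a l), ?_, by simpa using hz⟩
    intro i j
    have hc := hz.consistent i j
    by_cases hi : i = l <;> by_cases hj : j = l
    · subst hi; subst hj; simp; exact ha _
    · subst hi; simp [hj]; linarith [ha i]
    · subst hj; simp [hi]; exact hl i hi
    · simpa [hi, hj] using hc

theorem consistent_shift {a z : Fin 3 → ℝ} (c : ℝ) :
    Consistent a (fun i => z i + c) ↔ Consistent a z := by
  unfold Consistent
  refine forall_congr' fun i => forall_congr' fun j => ?_
  constructor <;> intro h <;> linarith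

theorem feas_shift {a : Fin 3 → ℝ} (w : List (Fin 3)) (z : Fin 3 → ℝ) (c : ℝ) :
    Feas a w (fun i => z i + c) ↔ Feas a w z := by
  induction w generalizing z with
  | nil => exact consistent_shift c
  | cons l w ih =>
    simp only [Feas, consistent_shift]
    have : (fun i => z i + c) + (Pi.single l (a l) : Fin 3 → ℝ) =
        fun i => (z + (Pi.single l (a l) : Fin 3 → ℝ)) i + c := by
      ext i; simp; ring
    rw [this, ih (z + (Pi.single l (a l) : Fin 3 → ℝ))]

theorem isOpen_feas (a : Fin 3 → ℝ) (w : List (Fin 3)) : IsOpen {z | Feas a w z} := by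
  have h0 : IsOpen {z | Consistent a z} := by
    simp only [Consistent, Set.ofPred_forall]
    refine isOpen_iInter_of_finite fun i => isOpen_iInter_of_finite fun j => ?_
    exact isOpen_lt (by fun_prop) (by fun_prop)
  induction w with
  | nil => exact h0
  | cons l w ih =>
    have : IsOpen ((fun z : Fin 3 → ℝ => z + Pi.single l (a l)) ⁻¹' {z | Feas a w z}) :=
      ih.preimage (by fun_prop)
    exact h0.inter this

theorem convex_feas (a : Fin 3 → ℝ) (w : List (Fin 3)) : Convex ℝ {z | Feas a w z} := by
  have h0 : Convex ℝ {z | Consistent a z} := by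
    intro x hx y hy s t hs ht hst i j
    have h1 := hx i j
    have h2 := hy i j
    have e : a j = s * a j + t * a j := by rw [← add_mul, hst, one_mul]
    simp only [Pi.add_apply, Pi.smul_apply, smul_eq_mul]
    rcases hs.lt_or_eq with hs' | hs'
    · nlinarith [mul_lt_mul_of_pos_left h1 hs', mul_le_mul_of_nonneg_left h2.le ht]
    · have : t = 1 := by linarith
      subst this; subst hs'; linarith
  induction w with
  | nil => exact h0
  | cons l w ih =>
    have : Convex ℝ ((fun z : Fin 3 → ℝ => z + Pi.single l (a l)) ⁻¹' {z | Feas a w z}) :=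
      ih.translate_preimage_left _
    exact h0.inter this

/-- Two consistent states reached from the same start after equally many crossings coincide. -/
theorem count_unique {a z : Fin 3 → ℝ} (ha : ∀ i, 0 < a i) {D E : Fin 3 → ℕ}
    (hD : Consistent a (st a z D)) (hE : Consistent a (st a z E))
    (hs : ∑ i, D i = ∑ i, E i) : D = E := by
  have key : ∀ {D E : Fin 3 → ℕ}, Consistent a (st a z D) → ∀ l l', D l < E l → E l' < D l' →
      ¬ Consistent a (st a z E) := by
    intro D E hD l l' h1 h2 hE
    have e1 := hE l l'
    have e2 := hD l' l
    simp only [st] at e1 e2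
    have h1' : ((D l : ℝ) + 1) ≤ E l := by exact_mod_cast h1
    have h2' : ((E l' : ℝ) + 1) ≤ D l' := by exact_mod_cast h2
    nlinarith [mul_le_mul_of_nonneg_right h1' (ha l).le, mul_le_mul_of_nonneg_right h2' (ha l').le]
  by_contra hne
  have ex : ∀ {D E : Fin 3 → ℕ}, ∑ i, D i = ∑ i, E i → D ≠ E → ∃ l, D l < E l := by
    intro D E hs hne
    by_contra hcon
    push Not at hcon
    apply hne
    have := (Finset.sum_eq_sum_iff_of_le (s := Finset.univ) (fun i _ => hcon i)).1 hs.symm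
    ext i
    exact (this i (Finset.mem_univ i)).symm
  obtain ⟨l, hl⟩ := ex hs hne
  obtain ⟨l', hl'⟩ := ex hs.symm (Ne.symm hne)
  exact key hD l l' hl hl' hE

/-- The starting state determines the word. -/
theorem feas_unique {a : Fin 3 → ℝ} (ha : ∀ i, 0 < a i) {w v : List (Fin 3)} {z : Fin 3 → ℝ}
    (hw : Feas a w z) (hv : Feas a v z) (hl : w.length = v.length) : w = v := by
  induction w generalizing v z with
  | nil => exact (List.length_eq_zero_iff.1 hl.symm).symm
  | cons l w ih =>
    cases v with
    | nil => simp at hl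
    | cons k v =>
      have hlk : l = k := by
        by_contra hne
        have h1 := (consistent_bump ha hw.1 l).1 hw.2.consistent k (Ne.symm hne)
        have h2 := (consistent_bump ha hv.1 k).1 hv.2.consistent l hne
        linarith
      subst hlk
      rw [ih hw.2 hv.2 (by simpa using hl)]

/-- A word of length `n` starts from `z` as soon as no two families are due simultaneously within the
first `n` crossings. -/
theorem exists_feas {a z : Fin 3 → ℝ} (ha : ∀ i, 0 < a i) (hz : Consistent a z) (n : ℕ)
    (hn : ∀ D : Fin 3 → ℕ, ∑ i, D i < n → Consistent a (st a z D) →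
      ∃ l, ∀ j, j ≠ l → st a z D l + a l < st a z D j + a j) :
    ∃ w : List (Fin 3), w.length = n ∧ Feas a w z := by
  induction n with
  | zero => exact ⟨[], rfl, hz⟩
  | succ n ih =>
    obtain ⟨w, hwl, hw⟩ := ih fun D hD => hn D (by omega)
    obtain ⟨l, hl⟩ := hn (cnt w) (by rw [sum_cnt, hwl]; omega) hw.st
    refine ⟨w ++ [l], by simp [hwl], (feas_append w z).2 ⟨hw, ?_⟩⟩
    rw [cnt_append, st_add_single]
    exact (consistent_bump ha hw.st l).2 hl

/-! ### Counting sectors, arms and centres in a convex open set -/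

/-- On the segment joining two points of a convex set where `z i - z j` has opposite signs there is
a point with `z i = z j`; its coordinates are a proper convex combination. -/
theorem exists_tie {P : Set (Fin 3 → ℝ)} (hP : Convex ℝ P) {p q : Fin 3 → ℝ} (hp : p ∈ P)
    (hq : q ∈ P) {i j : Fin 3} (h1 : p j < p i) (h2 : q i < q j) :
    ∃ s t : ℝ, 0 < s ∧ 0 < t ∧ s + t = 1 ∧ (s • p + t • q) ∈ P ∧
      s * p i + t * q i = s * p j + t * q j := by
  have hd : 0 < (p i - p j) + (q j - q i) := by linarith
  have hst : (q j - q i) / ((p i - p j) + (q j - q i)) +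
      (p i - p j) / ((p i - p j) + (q j - q i)) = 1 := by
    rw [← add_div, div_eq_one_iff_eq hd.ne']; ring
  refine ⟨_, _, div_pos (sub_pos.2 h2) hd, div_pos (sub_pos.2 h1) hd, hst,
    hP hp hq (div_pos (sub_pos.2 h2) hd).le (div_pos (sub_pos.2 h1) hd).le hst, ?_⟩
  field_simp
  ring

theorem exists_perturb {P : Set (Fin 3 → ℝ)} (hP : IsOpen P) {p : Fin 3 → ℝ} (hp : p ∈ P)
    (v : Fin 3 → ℝ) : ∃ ε : ℝ, 0 < ε ∧ p + ε • v ∈ P := by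
  have hc : Continuous fun ε : ℝ => p + ε • v := by fun_prop
  have h0 : ∀ᶠ ε in 𝓝 (0 : ℝ), p + ε • v ∈ P :=
    (hP.preimage hc).mem_nhds (by simpa using hp)
  obtain ⟨ε, h, hε⟩ := ((h0.filter_mono nhdsWithin_le_nhds).and
    (self_mem_nhdsWithin : Set.Ioi (0 : ℝ) ∈ 𝓝[>] 0)).exists
  exact ⟨ε, hε, h⟩

/-- `P` meets the open sector where coordinate `l` is strictly the largest. -/
def MeetsSector (P : Set (Fin 3 → ℝ)) (l : Fin 3) : Prop := ∃ z ∈ P, ∀ i, i ≠ l → z i < z l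

/-- `P` meets the arm where the two coordinates other than `k` are equal and exceed `z k`. -/
def MeetsArm (P : Set (Fin 3 → ℝ)) (k : Fin 3) : Prop :=
  ∃ z ∈ P, ∃ c, z k < c ∧ ∀ i, i ≠ k → z i = c

/-- `P` contains a point with three equal coordinates. -/
def MeetsCentre (P : Set (Fin 3 → ℝ)) : Prop := ∃ z ∈ P, ∃ c, ∀ i, z i = c

theorem MeetsCentre.sector {P : Set (Fin 3 → ℝ)} (hP : IsOpen P) (h : MeetsCentre P) (l : Fin 3) :
    MeetsSector P l := by
  obtain ⟨z, hz, c, hc⟩ := h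
  obtain ⟨ε, hε, h⟩ := exists_perturb hP hz (Pi.single l 1)
  exact ⟨_, h, fun i hi => by simp [hi, hc, hε]⟩

theorem MeetsCentre.arm {P : Set (Fin 3 → ℝ)} (hP : IsOpen P) (h : MeetsCentre P) (k : Fin 3) :
    MeetsArm P k := by
  obtain ⟨z, hz, c, hc⟩ := h
  obtain ⟨ε, hε, h⟩ := exists_perturb hP hz (Pi.single k (-1))
  exact ⟨_, h, c, by simp [hc, hε], fun i hi => by simp [hi, hc]⟩

theorem MeetsArm.sector {P : Set (Fin 3 → ℝ)} (hP : IsOpen P) {k l : Fin 3} (h : MeetsArm P k)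
    (hl : l ≠ k) : MeetsSector P l := by
  obtain ⟨z, hz, c, hk, hc⟩ := h
  obtain ⟨ε, hε, h⟩ := exists_perturb hP hz (Pi.single l 1)
  refine ⟨_, h, fun i hi => ?_⟩
  by_cases hik : i = k
  · subst hik; simp [hi, hc l hl]; linarith
  · simp [hi, hc i hik, hc l hl, hε]

/-- The centre lies in the convex hull of one point on each arm. -/
theorem meetsCentre_of_arms {P : Set (Fin 3 → ℝ)} (hP : Convex ℝ P) (h0 : MeetsArm P 0)
    (h1 : MeetsArm P 1) (h2 : MeetsArm P 2) : MeetsCentre P := by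
  obtain ⟨p, hp, c, hpk, hpc⟩ := h0
  obtain ⟨q, hq, d, hqk, hqd⟩ := h1
  obtain ⟨r, hr, e, hrk, hre⟩ := h2
  have p1 := hpc 1 (by decide)
  have p2 := hpc 2 (by decide)
  have q0 := hqd 0 (by decide)
  have q2 := hqd 2 (by decide)
  have r0 := hre 0 (by decide)
  have r1 := hre 1 (by decide)
  obtain ⟨s, t, hs, ht, hst, hm, he⟩ := exists_tie hP hq hr (i := 2) (j := 1) (by linarith)
    (by linarith)
  obtain ⟨s', t', hs', ht', hst', hm', he'⟩ := exists_tie hP hm hp (i := 0) (j := 1)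
    (by simp only [Pi.add_apply, Pi.smul_apply, smul_eq_mul]; rw [q0, r0, r1]; nlinarith)
    (by linarith)
  refine ⟨_, hm', s' * (s * q 0 + t * r 0) + t' * p 0, ?_⟩
  simp only [Pi.add_apply, Pi.smul_apply, smul_eq_mul] at he' ⊢
  intro i
  fin_cases i
  · simp
  · simp [he']
  · simp only [Fin.reduceFinMk]
    rw [he, p2, ← p1, he']

/-- A segment from one sector to another crosses the arm between them, the centre, or both arms of
the third sector. -/
theorem arm_of_sectors {P : Set (Fin 3 → ℝ)} (hP : Convex ℝ P) {i j k : Fin 3}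
    (hij : i ≠ j) (hik : i ≠ k) (hjk : j ≠ k) (hall : ∀ l, l = i ∨ l = j ∨ l = k)
    (hi : MeetsSector P i) (hj : MeetsSector P j) :
    MeetsArm P k ∨ (MeetsArm P i ∧ MeetsArm P j) ∨ MeetsCentre P := by
  obtain ⟨p, hp, hpi⟩ := hi
  obtain ⟨q, hq, hqj⟩ := hj
  have hp1 := hpi j hij.symm
  have hp2 := hpi k hik.symm
  have hq1 := hqj i hij
  have hq2 := hqj k hjk.symm
  obtain ⟨s, t, hs, ht, hst, hm, he⟩ := exists_tie hP hp hq hp1 hq1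
  set r := s • p + t • q with hr
  have hri : r i = s * p i + t * q i := by simp [hr]
  have hrj : r j = s * p j + t * q j := by simp [hr]
  have hrij : r i = r j := by rw [hri, hrj, he]
  rcases lt_trichotomy (r k) (r i) with h | h | h
  · left
    refine ⟨r, hm, r i, h, fun l hl => ?_⟩
    rcases hall l with rfl | rfl | rfl
    · rfl
    · exact hrij.symm
    · exact absurd rfl hl
  · right; right
    refine ⟨r, hm, r i, fun l => ?_⟩
    rcases hall l with rfl | rfl | rfl
    · rfl
    · exact hrij.symm
    · exact h
  · right; left
    constructor
    · obtain ⟨s', t', hs', ht', -, hm', he'⟩ := exists_tie hP hq hm hq2 (hrij ▸ h)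
      refine ⟨_, hm', s' * q j + t' * r j, ?_, fun l hl => ?_⟩
      · simp only [Pi.add_apply, Pi.smul_apply, smul_eq_mul]
        rw [hrij]; nlinarith
      · simp only [Pi.add_apply, Pi.smul_apply, smul_eq_mul]
        rcases hall l with rfl | rfl | rfl
        · exact absurd rfl hl
        · rfl
        · exact he'.symm
    · obtain ⟨s', t', hs', ht', -, hm', he'⟩ := exists_tie hP hp hm hp2 h
      refine ⟨_, hm', s' * p i + t' * r i, ?_, fun l hl => ?_⟩
      · simp only [Pi.add_apply, Pi.smul_apply, smul_eq_mul]
        rw [← hrij]; nlinarith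
      · simp only [Pi.add_apply, Pi.smul_apply, smul_eq_mul]
        rcases hall l with rfl | rfl | rfl
        · rfl
        · exact absurd rfl hl
        · exact he'.symm

theorem exists_sector {P : Set (Fin 3 → ℝ)} (hP : IsOpen P) (hne : P.Nonempty) :
    ∃ l, MeetsSector P l := by
  obtain ⟨z, hz⟩ := hne
  obtain ⟨l, hl⟩ := Finite.exists_max z
  obtain ⟨ε, hε, h⟩ := exists_perturb hP hz (Pi.single l 1)
  refine ⟨l, _, h, fun i hi => ?_⟩
  simp [hi]; linarith [hl i]

open Classical in
/-- The Euler relation `S - A + C = 1` for the numbers of sectors, arms and centres met by a nonempty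
convex open set. -/
theorem sector_count {P : Set (Fin 3 → ℝ)} (hP : IsOpen P) (hC : Convex ℝ P) (hne : P.Nonempty) :
    (∑ l, if MeetsSector P l then 1 else 0) + (if MeetsCentre P then 1 else 0) =
      1 + ∑ k, if MeetsArm P k then 1 else 0 := by
  have hs := fun h l => MeetsCentre.sector hP h l
  have harm := fun h l => MeetsCentre.arm hP h l
  have a01 := fun h => MeetsArm.sector hP (k := 0) (l := 1) h (by decide)
  have a02 := fun h => MeetsArm.sector hP (k := 0) (l := 2) h (by decide)
  have a10 := fun h => MeetsArm.sector hP (k := 1) (l := 0) h (by decide)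
  have a12 := fun h => MeetsArm.sector hP (k := 1) (l := 2) h (by decide)
  have a20 := fun h => MeetsArm.sector hP (k := 2) (l := 0) h (by decide)
  have a21 := fun h => MeetsArm.sector hP (k := 2) (l := 1) h (by decide)
  have h3 := meetsCentre_of_arms hC
  have s01 := arm_of_sectors hC (i := 0) (j := 1) (k := 2) (by decide) (by decide) (by decide)
    (by decide)
  have s02 := arm_of_sectors hC (i := 0) (j := 2) (k := 1) (by decide) (by decide) (by decide)
    (by decide)
  have s12 := arm_of_sectors hC (i := 1) (j := 2) (k := 0) (by decide) (by decide) (by decide)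
    (by decide)
  have hex : MeetsSector P 0 ∨ MeetsSector P 1 ∨ MeetsSector P 2 := by
    obtain ⟨l, hl⟩ := exists_sector hP hne
    fin_cases l
    · exact Or.inl hl
    · exact Or.inr (Or.inl hl)
    · exact Or.inr (Or.inr hl)
  by_cases hc : MeetsCentre P
  · simp [hc, hs hc, harm hc]
  · simp only [Fin.sum_univ_three, hc, if_false]
    simp only [hc, or_false, imp_false] at s01 s02 s12 h3
    clear hs harm
    by_cases A0 : MeetsArm P 0 <;> by_cases A1 : MeetsArm P 1 <;> by_cases A2 : MeetsArm P 2 <;>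
      by_cases S0 : MeetsSector P 0 <;> by_cases S1 : MeetsSector P 1 <;>
      by_cases S2 : MeetsSector P 2 <;> simp_all

open Classical in
/-- A point `e` splits an open interval `Q` into two pieces iff it lies in `Q`. -/
theorem interval_count {Q : Set ℝ} (hP : IsOpen Q) (hC : Q.OrdConnected) (hne : Q.Nonempty)
    (e : ℝ) :
    (if ∃ x ∈ Q, x < e then 1 else 0) + (if ∃ x ∈ Q, e < x then 1 else 0) =
      1 + if e ∈ Q then 1 else 0 := by
  by_cases he : e ∈ Q
  · have hm : ∀ᶠ x in 𝓝 e, x ∈ Q := hP.mem_nhds he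
    have h1 : ∃ x ∈ Q, x < e := by
      obtain ⟨x, hx, hxe⟩ := ((hm.filter_mono nhdsWithin_le_nhds).and
        (self_mem_nhdsWithin : Set.Iio e ∈ 𝓝[<] e)).exists
      exact ⟨x, hx, hxe⟩
    have h2 : ∃ x ∈ Q, e < x := by
      obtain ⟨x, hx, hxe⟩ := ((hm.filter_mono nhdsWithin_le_nhds).and
        (self_mem_nhdsWithin : Set.Ioi e ∈ 𝓝[>] e)).exists
      exact ⟨x, hx, hxe⟩
    simp [he, h1, h2]
  · obtain ⟨x, hx⟩ := hne
    have hno : ∀ y ∈ Q, ∀ y' ∈ Q, y < e → ¬ e < y' := fun y hy y' hy' h h' =>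
      he (hC.out hy hy' ⟨h.le, h'.le⟩)
    rcases lt_trichotomy x e with h | h | h
    · have h1 : ∃ x ∈ Q, x < e := ⟨x, hx, h⟩
      have h2 : ¬ ∃ x ∈ Q, e < x := fun ⟨y, hy, hy'⟩ => hno x hx y hy h hy'
      simp only [h1, h2, he, if_true, if_false]
    · exact absurd (h ▸ hx) he
    · have h1 : ∃ x ∈ Q, e < x := ⟨x, hx, h⟩
      have h2 : ¬ ∃ x ∈ Q, x < e := fun ⟨y, hy, hy'⟩ => hno y hy x hx hy' h
      simp only [h1, h2, he, if_true, if_false]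

/-! ### Counting words -/

/-- All words of length `n`. -/
def words (n : ℕ) : Finset (List (Fin 3)) :=
  (Finset.univ : Finset (Fin n → Fin 3)).image List.ofFn

theorem mem_words {n : ℕ} {w : List (Fin 3)} : w ∈ words n ↔ w.length = n := by
  simp only [words, Finset.mem_image, Finset.mem_univ, true_and]
  constructor
  · rintro ⟨f, rfl⟩; simp
  · rintro rfl; exact ⟨w.get, List.ofFn_get w⟩

theorem sum_words_cons (n : ℕ) (f : List (Fin 3) → ℕ) :
    ∑ v ∈ words (n + 1), f v = ∑ w ∈ words n, ∑ l, f (l :: w) := by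
  rw [← Finset.sum_product']
  symm
  refine Finset.sum_bij (fun p _ => p.2 :: p.1) ?_ ?_ ?_ ?_
  · intro p hp
    simp only [Finset.mem_product, mem_words] at hp
    simp [mem_words, hp.1]
  · rintro ⟨w, l⟩ _ ⟨v, k⟩ _ h
    simp only [List.cons.injEq] at h
    simp [h.1, h.2]
  · intro v hv
    rw [mem_words] at hv
    cases v with
    | nil => simp at hv
    | cons l w => exact ⟨(w, l), by simpa [mem_words] using hv, rfl⟩
  · intros; rfl

theorem sum_words_append (n : ℕ) (f : List (Fin 3) → ℕ) :
    ∑ v ∈ words (n + 1), f v = ∑ w ∈ words n, ∑ l, f (w ++ [l]) := by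
  rw [← Finset.sum_product']
  symm
  refine Finset.sum_bij (fun p _ => p.1 ++ [p.2]) ?_ ?_ ?_ ?_
  · intro p hp
    simp only [Finset.mem_product, mem_words] at hp
    simp [mem_words, hp.1]
  · rintro ⟨w, l⟩ _ ⟨v, k⟩ _ h
    have := List.append_inj' h rfl
    simp only [List.cons.injEq, and_true] at this
    simp [this.1, this.2]
  · intro v hv
    rw [mem_words] at hv
    have hne : v ≠ [] := by rintro rfl; simp at hv
    refine ⟨(v.dropLast, v.getLast hne), by simp [mem_words, hv], List.dropLast_append_getLast hne⟩
  · intros; rfl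

theorem sum_three {i j k : Fin 3} (hij : i ≠ j) (hik : i ≠ k) (hjk : j ≠ k) (f : Fin 3 → ℕ) :
    ∑ l, f l = f i + f j + f k := by
  have : (Finset.univ : Finset (Fin 3)) = {i, j, k} := by
    revert i j k; decide
  rw [this, Finset.sum_insert (by simp [hij, hik]), Finset.sum_pair hjk, add_assoc]

theorem exists_others (k : Fin 3) :
    ∃ i j : Fin 3, i ≠ j ∧ i ≠ k ∧ j ≠ k ∧ ∀ l, l = i ∨ l = j ∨ l = k := by
  revert k; decide

/-- Integral independence of the periods. -/
def Indep (a : Fin 3 → ℝ) : Prop := ∀ p : Fin 3 → ℤ, ∑ l, (p l : ℝ) * a l = 0 → p = 0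

theorem Indep.three {a : Fin 3 → ℝ} (h : Indep a) {i j k : Fin 3} (hij : i ≠ j) (hik : i ≠ k)
    (hjk : j ≠ k) {p q r : ℤ} (e : (p : ℝ) * a i + q * a j + r * a k = 0) :
    p = 0 ∧ q = 0 ∧ r = 0 := by
  have hu : (Finset.univ : Finset (Fin 3)) = {i, j, k} := by
    clear e; revert i j k; decide
  have := h (fun l => if l = i then p else if l = j then q else r) (by
    rw [hu, Finset.sum_insert (by simp [hij, hik]), Finset.sum_pair hjk]
    simp only [if_true, hij.symm, hik.symm, hjk.symm, if_false]
    linarith)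
  have e1 := congrFun this i
  have e2 := congrFun this j
  have e3 := congrFun this k
  simp [hij.symm, hik.symm, hjk.symm] at e1 e2 e3
  exact ⟨e1, e2, e3⟩

theorem Indep.two {a : Fin 3 → ℝ} (h : Indep a) {i j : Fin 3} (hij : i ≠ j) {p q : ℤ}
    (e : (p : ℝ) * a i = q * a j) : p = 0 ∧ q = 0 := by
  obtain ⟨k, hik, hjk⟩ : ∃ k, i ≠ k ∧ j ≠ k := by clear e; revert i j; decide
  have := h.three hij hik hjk (p := p) (q := -q) (r := 0) (by push_cast; linarith)
  exact ⟨this.1, by simpa using this.2.1⟩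

theorem Indep.succ_ne {a : Fin 3 → ℝ} (h : Indep a) {i j : Fin 3} (hij : i ≠ j) (p q : ℕ) :
    ((p : ℝ) + 1) * a i ≠ (q + 1) * a j := by
  intro e
  have := h.two hij (p := p + 1) (q := q + 1) (by push_cast; exact e)
  omega

/-- The word is realised from a state on arm `k`. -/
def ArmW (a : Fin 3 → ℝ) (k : Fin 3) (w : List (Fin 3)) : Prop :=
  ∃ x, 0 < x ∧ Feas a w (Pi.single k (-x))

/-- The word is realised from a state on arm `k` after which family `k` is due simultaneously with
the earlier of the two others. -/
def TieW (a : Fin 3 → ℝ) (k : Fin 3) (w : List (Fin 3)) : Prop :=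
  ∃ x, (0 < x ∧ Feas a w (Pi.single k (-x))) ∧ ∃ i, i ≠ k ∧
    (cnt w k + 1) * a k - x = (cnt w i + 1) * a i ∧
    ∀ j, j ≠ k → (cnt w i + 1) * a i ≤ (cnt w j + 1) * a j

open Classical in
/-- A word on arm `k` is realised from an interval of the arm. It extends to the right in two ways if
that interval contains a tie point and in one way otherwise; the third family is never due first. -/
theorem arm_extensions {a : Fin 3 → ℝ} (ha : ∀ i, 0 < a i) (hI : Indep a) (k : Fin 3)
    (w : List (Fin 3)) :
    (∑ l, if ArmW a k (w ++ [l]) then 1 else 0) =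
      (if ArmW a k w then 1 else 0) + (if TieW a k w then 1 else 0) := by
  by_cases hw : ArmW a k w
  swap
  · have h1 : ∀ l, ¬ ArmW a k (w ++ [l]) := fun l ⟨x, hx, h⟩ => hw ⟨x, hx, ((feas_append w _).1 h).1⟩
    have h2 : ¬ TieW a k w := fun ⟨x, hx, _⟩ => hw ⟨x, hx⟩
    simp [h1, h2, hw]
  -- `i` is the first due among the two families other than `k`
  obtain ⟨i, j, hij, hik, hjk, hall, hlt⟩ : ∃ i j : Fin 3, i ≠ j ∧ i ≠ k ∧ j ≠ k ∧
      (∀ l, l = i ∨ l = j ∨ l = k) ∧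
      ((cnt w i : ℝ) + 1) * a i < (cnt w j + 1) * a j := by
    obtain ⟨i, j, hij, hik, hjk, hall⟩ := exists_others k
    rcases (hI.succ_ne hij (cnt w i) (cnt w j)).lt_or_gt with h | h
    · exact ⟨i, j, hij, hik, hjk, hall, h⟩
    · exact ⟨j, i, hij.symm, hjk, hik, fun l => by have := hall l; tauto, h⟩
  set Q : Set ℝ := {x | 0 < x ∧ Feas a w (Pi.single k (-x))} with hQ
  set e : ℝ := (cnt w k + 1) * a k - (cnt w i + 1) * a i with he
  have hQo : IsOpen Q := by
    have hc : Continuous fun x : ℝ => (Pi.single k (-x) : Fin 3 → ℝ) :=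
      (continuous_single k).comp continuous_neg
    exact isOpen_Ioi.inter ((isOpen_feas a w).preimage hc)
  have hQc : Q.OrdConnected := by
    have : Convex ℝ {x : ℝ | Feas a w (Pi.single k (-x))} := by
      intro x hx y hy s t hs ht hst
      have := convex_feas a w hx hy hs ht hst
      have e : (Pi.single k (-(s • x + t • y)) : Fin 3 → ℝ) =
          s • Pi.single k (-x) + t • Pi.single k (-y) := by
        ext l
        by_cases hl : l = k
        · subst hl; simp; ring
        · simp [hl]
      simp only [Set.mem_ofPred_eq] at this ⊢
      rw [e]; exact this
    exact ((convex_Ioi 0).inter this).ordConnected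
  have hQn : Q.Nonempty := hw
  have hext : ∀ l, ArmW a k (w ++ [l]) ↔ ∃ x ∈ Q, ∀ j, j ≠ l →
      st a (Pi.single k (-x)) (cnt w) l + a l < st a (Pi.single k (-x)) (cnt w) j + a j := by
    intro l
    constructor
    · rintro ⟨x, hx, h⟩
      obtain ⟨h1, h2⟩ := (feas_append w _).1 h
      rw [cnt_append, st_add_single] at h2
      exact ⟨x, ⟨hx, h1⟩, (consistent_bump ha h1.st l).1 h2⟩
    · rintro ⟨x, ⟨hx, h1⟩, h⟩
      refine ⟨x, hx, (feas_append w _).2 ⟨h1, ?_⟩⟩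
      rw [cnt_append, st_add_single]
      exact (consistent_bump ha h1.st l).2 h
  have sti : ∀ x, st a (Pi.single k (-x)) (cnt w) i = cnt w i * a i := by
    intro x; simp [st, hik]
  have stj : ∀ x, st a (Pi.single k (-x)) (cnt w) j = cnt w j * a j := by
    intro x; simp [st, hjk]
  have stk : ∀ x, st a (Pi.single k (-x)) (cnt w) k = -x + cnt w k * a k := by
    intro x; simp [st]
  have hi : ArmW a k (w ++ [i]) ↔ ∃ x ∈ Q, x < e := by
    rw [hext]
    refine exists_congr fun x => and_congr_right fun _ => ?_
    constructor
    · intro h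
      have := h k hik.symm
      rw [sti, stk] at this
      rw [he]; linarith
    · intro h l hl
      rw [he] at h
      rcases hall l with rfl | rfl | rfl
      · exact absurd rfl hl
      · rw [sti, stj]; linarith
      · rw [sti, stk]; linarith
  have hk : ArmW a k (w ++ [k]) ↔ ∃ x ∈ Q, e < x := by
    rw [hext]
    refine exists_congr fun x => and_congr_right fun _ => ?_
    constructor
    · intro h
      have := h i hik
      rw [sti, stk] at this
      rw [he]; linarith
    · intro h l hl
      rw [he] at h
      rcases hall l with rfl | rfl | rfl
      · rw [sti, stk]; linarith
      · rw [stj, stk]; linarith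
      · exact absurd rfl hl
  have hj : ¬ ArmW a k (w ++ [j]) := by
    rw [hext]
    rintro ⟨x, -, h⟩
    have := h i hij
    rw [sti, stj] at this
    linarith
  have ht : TieW a k w ↔ e ∈ Q := by
    constructor
    · rintro ⟨x, hx, i', hi', h1, h2⟩
      rcases hall i' with rfl | rfl | rfl
      · have : x = e := by rw [he]; linarith
        rw [← this]; exact hx
      · have := h2 i hik
        linarith
      · exact absurd rfl hi'
    · intro h
      refine ⟨e, h, i, hik, by rw [he]; ring, fun l hl => ?_⟩
      rcases hall l with rfl | rfl | rfl
      · exact le_rfl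
      · exact hlt.le
      · exact absurd rfl hl
  rw [sum_three hij hik hjk]
  simp only [hi, hj, hk, ht, hw, if_false, if_true, add_zero]
  convert interval_count hQo hQc hQn e

/-! ### Ties on the arms and the orbit of the corner -/

/-- After `D` crossings starting from a corner, the next crossing belongs to family `i`. -/
def CornerState (a : Fin 3 → ℝ) (D : Fin 3 → ℕ) (i : Fin 3) : Prop :=
  (∀ l, D l * a l < (D i + 1) * a i) ∧ ∀ l, l ≠ i → (D i + 1) * a i < (D l + 1) * a l

theorem CornerState.le {a : Fin 3 → ℝ} {D : Fin 3 → ℕ} {i : Fin 3} (h : CornerState a D i)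
    (l : Fin 3) : (D i + 1) * a i ≤ (D l + 1) * a l := by
  by_cases hl : l = i
  · rw [hl]
  · exact (h.2 l hl).le

theorem CornerState.consistent {a : Fin 3 → ℝ} {D : Fin 3 → ℕ} {i : Fin 3}
    (h : CornerState a D i) : Consistent a (st a 0 D) := by
  intro l j
  have h1 := h.1 l
  have h2 := h.le j
  simp only [st, Pi.zero_apply]
  linarith

theorem exists_next {a : Fin 3 → ℝ} (hI : Indep a) (D : Fin 3 → ℕ) :
    ∃ l, ∀ j, j ≠ l → (D l + 1) * a l < (D j + 1) * a j := by
  obtain ⟨l, hl⟩ := Finite.exists_min fun l => ((D l : ℝ) + 1) * a l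
  exact ⟨l, fun j hj => lt_of_le_of_ne (hl j) (hI.succ_ne hj.symm _ _)⟩

theorem consistent_zero {a : Fin 3 → ℝ} (ha : ∀ i, 0 < a i) : Consistent a 0 := by
  intro i j; simpa using ha j

theorem exists_feas_zero {a : Fin 3 → ℝ} (ha : ∀ i, 0 < a i) (hI : Indep a) (n : ℕ) :
    ∃ w : List (Fin 3), w.length = n ∧ Feas a w 0 := by
  refine exists_feas ha (consistent_zero ha) n fun D _ _ => ?_
  obtain ⟨l, hl⟩ := exists_next hI D
  refine ⟨l, fun j hj => ?_⟩
  have := hl j hj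
  simp only [st, Pi.zero_apply]
  linarith

theorem exists_cornerState {a : Fin 3 → ℝ} (ha : ∀ i, 0 < a i) (hI : Indep a) (n : ℕ) :
    ∃ D i, ∑ l, D l = n ∧ CornerState a D i := by
  obtain ⟨w, hw, hf⟩ := exists_feas_zero ha hI n
  obtain ⟨i, hi⟩ := exists_next hI (cnt w)
  refine ⟨cnt w, i, by rw [sum_cnt, hw], fun l => ?_, hi⟩
  have := hf.st l i
  simp only [st, Pi.zero_apply] at this
  linarith

/-- A tie on arm `k` occurs at the corner state of the same length, and it fixes the starting
point on the arm. -/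
theorem TieW.corner {a : Fin 3 → ℝ} (ha : ∀ i, 0 < a i) (hI : Indep a) {k i : Fin 3}
    {w : List (Fin 3)} {C : Fin 3 → ℕ} (hC : CornerState a C i) (hl : w.length = ∑ l, C l)
    (ht : TieW a k w) :
    i ≠ k ∧ Feas a w (Pi.single k (-((C k + 1) * a k - (C i + 1) * a i))) := by
  obtain ⟨x, ⟨hx, hf⟩, i', hi', h1, h2⟩ := ht
  have hxa : x < a k := by
    have := hf.consistent i' k
    simp [hi'] at this
    exact this
  have hst : CornerState a (cnt w) i' := by
    constructor
    · intro l
      by_cases hlk : l = k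
      · subst hlk; linarith
      · have := hf.st l k
        simp [st, hlk] at this
        linarith
    · intro l hl
      by_cases hlk : l = k
      · subst hlk; linarith
      · exact lt_of_le_of_ne (h2 l hlk) (hI.succ_ne hl.symm _ _)
  have hcnt : cnt w = C := count_unique ha hst.consistent hC.consistent (by rw [sum_cnt, hl])
  subst hcnt
  have hii : i = i' := by
    by_contra hne
    have := hC.2 i' (Ne.symm hne)
    have := hst.2 i hne
    linarith
  subst hii
  refine ⟨hi', ?_⟩
  have : ((cnt w k : ℝ) + 1) * a k - (cnt w i + 1) * a i = x := by linarith
  rw [this]; exact hf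

/-- Conversely, each arm other than `i` carries a tie. Integral independence excludes any earlier
tie from the same starting point. -/
theorem exists_tieW {a : Fin 3 → ℝ} (ha : ∀ i, 0 < a i) (hI : Indep a) {k i : Fin 3}
    {C : Fin 3 → ℕ} (hC : CornerState a C i) (hik : i ≠ k) :
    ∃ w : List (Fin 3), w.length = ∑ l, C l ∧ TieW a k w := by
  obtain ⟨j, hij, hjk, hall⟩ : ∃ j, i ≠ j ∧ j ≠ k ∧ ∀ l, l = i ∨ l = j ∨ l = k := by
    clear hC; revert i k; decide
  set x : ℝ := (C k + 1) * a k - (C i + 1) * a i with hx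
  have hx0 : 0 < x := by have := hC.2 k hik.symm; linarith
  have hxa : x < a k := by have := hC.1 k; linarith
  have hz : Consistent a (Pi.single k (-x)) := by
    intro l m
    have := ha m
    by_cases h1 : l = k <;> by_cases h2 : m = k <;> simp [h1, h2] <;> linarith
  have sti : ∀ D l, l ≠ k → st a (Pi.single k (-x)) D l = D l * a l := by
    intro D l h; simp [st, h]
  have stk : ∀ D, st a (Pi.single k (-x)) D k = -x + D k * a k := by
    intro D; simp [st]
  have hCs : Consistent a (st a (Pi.single k (-x)) C) := by
    intro l m
    have h1 : st a (Pi.single k (-x)) C l < (C i + 1) * a i := by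
      by_cases h : l = k
      · subst h; rw [stk]; have := hC.1 l; linarith
      · rw [sti _ _ h]; exact hC.1 l
    have h2 : (C i + 1) * a i ≤ st a (Pi.single k (-x)) C m + a m := by
      by_cases h : m = k
      · subst h; rw [stk]; linarith
      · rw [sti _ _ h]; have := hC.le m; linarith
    linarith
  obtain ⟨w, hwl, hw⟩ := exists_feas ha hz (∑ l, C l) (by
    intro D hD hDc
    obtain ⟨l, hl⟩ := Finite.exists_min fun l => st a (Pi.single k (-x)) D l + a l
    refine ⟨l, fun m hm => lt_of_le_of_ne (hl m) fun heq => ?_⟩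
    have hDi : st a (Pi.single k (-x)) D i = _ := sti D i hik
    have hDj : st a (Pi.single k (-x)) D j = _ := sti D j hjk
    have hDk := stk D
    -- the three possible pairs of simultaneously due families
    have t1 : ((D i : ℝ) + 1) * a i ≠ (D j + 1) * a j := hI.succ_ne hij _ _
    have t2 : -x + D k * a k + a k ≠ D j * a j + a j := by
      intro h
      have := hI.three hij hik hjk (p := C i + 1) (q := -(D j + 1)) (r := D k - C k)
        (by push_cast; rw [hx] at h; linarith)
      omega
    have t3 : -x + D k * a k + a k = D i * a i + a i →
        (∀ m, D i * a i + a i ≤ st a (Pi.single k (-x)) D m + a m) → False := by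
      intro h hmin
      have := hI.two hik (p := C i - D i) (q := C k - D k)
        (by push_cast; rw [hx] at h; linarith)
      have e1 : D i = C i := by omega
      have e2 : D k = C k := by omega
      have hlt : D j + 1 ≤ C j := by
        have f := sum_three hij hik hjk D
        have g := sum_three hij hik hjk C
        omega
      have hlt' : (D j : ℝ) + 1 ≤ C j := by exact_mod_cast hlt
      have := hmin j
      have := hC.1 j
      have := mul_le_mul_of_nonneg_right hlt' (ha j).le
      rw [hDj] at *
      rw [e1] at *
      linarith
    rcases hall l with rfl | rfl | rfl <;> rcases hall m with rfl | rfl | rfl <;>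
      first
      | exact absurd rfl hm
      | skip
    · rw [hDi, hDj] at heq; exact t1 (by linarith)
    · rw [hDi, hDk] at heq; exact t3 heq.symm (by rw [hDi] at hl; exact hl)
    · rw [hDi, hDj] at heq; exact t1 (by linarith)
    · rw [hDj, hDk] at heq; exact t2 heq.symm
    · rw [hDi, hDk] at heq; exact t3 heq (by rw [hDk, heq] at hl; exact hl)
    · rw [hDj, hDk] at heq; exact t2 heq)
  have hcnt : cnt w = C := count_unique ha hw.st hCs (by rw [sum_cnt, hwl])
  refine ⟨w, hwl, x, ⟨hx0, hw⟩, i, hik, ?_, ?_⟩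
  · rw [hcnt, hx]; ring
  · rw [hcnt]; exact fun l _ => hC.le l

open Classical in
/-- The next family `i` due on the orbit of the corner determines the ties: one on each arm other than
`i`, none on arm `i`. -/
theorem tie_count {a : Fin 3 → ℝ} (ha : ∀ i, 0 < a i) (hI : Indep a) (n : ℕ) :
    ∑ k, ∑ w ∈ words n, (if TieW a k w then 1 else 0) = 2 := by
  obtain ⟨C, i, hn, hC⟩ := exists_cornerState ha hI n
  have h0 : ∑ w ∈ words n, (if TieW a i w then 1 else 0) = 0 := by
    refine Finset.sum_eq_zero fun w hw => if_neg fun ht => ?_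
    exact (ht.corner ha hI hC (by rw [mem_words.1 hw, hn])).1 rfl
  have h1 : ∀ k, i ≠ k → ∑ w ∈ words n, (if TieW a k w then 1 else 0) = 1 := by
    intro k hk
    obtain ⟨w, hwl, hw⟩ := exists_tieW ha hI hC hk
    rw [Finset.sum_eq_single w, if_pos hw]
    · intro v hv hne
      refine if_neg fun ht => hne ?_
      rw [mem_words] at hv
      exact feas_unique ha (ht.corner ha hI hC (by rw [hv, hn])).2 (hw.corner ha hI hC hwl).2
        (by rw [hv, hwl, hn])
    · intro h; exact absurd (mem_words.2 (by rw [hwl, hn])) h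
  obtain ⟨j, k, hjk, hj, hk, -⟩ := exists_others i
  rw [sum_three hj.symm hk.symm hjk, h0, h1 j hj.symm, h1 k hk.symm]

open Classical in
theorem arm_count {a : Fin 3 → ℝ} (ha : ∀ i, 0 < a i) (hI : Indep a) (n : ℕ) :
    ∑ k, ∑ w ∈ words n, (if ArmW a k w then 1 else 0) = 2 * n + 3 := by
  induction n with
  | zero =>
    have h : ∀ k, ArmW a k [] := by
      intro k
      refine ⟨a k / 2, half_pos (ha k), fun l m => ?_⟩
      have := ha m
      by_cases h1 : l = k <;> by_cases h2 : m = k <;> simp [h1, h2] <;> linarith [ha k]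
    have hw : words 0 = {[]} := by ext w; simp [mem_words]
    simp only [hw, Finset.sum_singleton, if_pos (h _)]
    simp
  | succ n ih =>
    have : ∀ k, ∑ w ∈ words (n + 1), (if ArmW a k w then 1 else 0) =
        ∑ w ∈ words n, (if ArmW a k w then 1 else 0) +
          ∑ w ∈ words n, (if TieW a k w then 1 else 0) := by
      intro k
      rw [sum_words_append, ← Finset.sum_add_distrib]
      exact Finset.sum_congr rfl fun w _ => arm_extensions ha hI k w
    simp only [this]
    rw [Finset.sum_add_distrib, ih, tie_count ha hI]
    ring

open Classical in
/-- The letters that can precede `w` are the sectors met by its set of states, so the Euler relation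
counts them. -/
theorem left_extensions {a : Fin 3 → ℝ} (ha : ∀ i, 0 < a i) (w : List (Fin 3)) :
    (∑ l, if ∃ z, Feas a (l :: w) z then 1 else 0) + (if Feas a w 0 then 1 else 0) =
      (if ∃ z, Feas a w z then 1 else 0) + ∑ k, if ArmW a k w then 1 else 0 := by
  by_cases hw : ∃ z, Feas a w z
  swap
  · have h1 : ∀ l, ¬ ∃ z, Feas a (l :: w) z := fun l ⟨z, h⟩ => hw ⟨_, h.2⟩
    have h2 : ¬ Feas a w 0 := fun h => hw ⟨_, h⟩
    have h3 : ∀ k, ¬ ArmW a k w := fun k ⟨x, _, h⟩ => hw ⟨_, h⟩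
    simp only [h1, h2, h3, hw, if_false, Finset.sum_const_zero, add_zero]
  have h1 : ∀ l, (∃ z, Feas a (l :: w) z) ↔ MeetsSector {z | Feas a w z} l := fun l =>
    feas_cons_iff ha l w
  have h2 : Feas a w 0 ↔ MeetsCentre {z | Feas a w z} := by
    constructor
    · intro h; exact ⟨0, h, 0, fun _ => rfl⟩
    · rintro ⟨z, hz, c, hc⟩
      have : z = fun i => (0 : Fin 3 → ℝ) i + c := by ext i; simp [hc]
      rw [this] at hz
      exact (feas_shift w 0 c).1 hz
  have h3 : ∀ k, ArmW a k w ↔ MeetsArm {z | Feas a w z} k := by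
    intro k
    constructor
    · rintro ⟨x, hx, h⟩
      exact ⟨_, h, 0, by simpa using hx, fun i hi => by simp [hi]⟩
    · rintro ⟨z, hz, c, hk, hc⟩
      refine ⟨c - z k, sub_pos.2 hk, (feas_shift w _ c).1 ?_⟩
      have : (fun i => (Pi.single k (-(c - z k)) : Fin 3 → ℝ) i + c) = z := by
        ext i
        by_cases hi : i = k
        · subst hi; simp
        · simp [hi, hc i hi]
      rw [this]; exact hz
  simp only [h1, h2, h3, hw, if_true]
  exact sector_count (isOpen_feas a w) (convex_feas a w) hw

open Classical in
/-- The number of words of length `n` realised from some state. -/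
theorem word_count {a : Fin 3 → ℝ} (ha : ∀ i, 0 < a i) (hI : Indep a) (n : ℕ) :
    ∑ w ∈ words n, (if ∃ z, Feas a w z then 1 else 0) = n ^ 2 + n + 1 := by
  induction n with
  | zero =>
    have hw : words 0 = {[]} := by ext w; simp [mem_words]
    have : ∃ z, Feas a [] z := ⟨0, consistent_zero ha⟩
    simp only [hw, Finset.sum_singleton, if_pos this]
    norm_num
  | succ n ih =>
    have h0 : ∑ w ∈ words n, (if Feas a w 0 then 1 else 0) = 1 := by
      obtain ⟨w, hwl, hw⟩ := exists_feas_zero ha hI n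
      rw [Finset.sum_eq_single w, if_pos hw]
      · intro v hv hne
        exact if_neg fun h => hne (feas_unique ha h hw (by rw [mem_words.1 hv, hwl]))
      · intro h; exact absurd (mem_words.2 hwl) h
    have h1 := Finset.sum_congr (rfl : words n = words n) fun w _ => left_extensions ha w
    rw [Finset.sum_add_distrib, Finset.sum_add_distrib, ← sum_words_cons n
      fun w => if ∃ z, Feas a w z then 1 else 0, h0, ih, Finset.sum_comm, arm_count ha hI] at h1
    have : (n + 1) ^ 2 = n ^ 2 + 2 * n + 1 := by ring
    omega

/-! ### Kronecker's theorem in dimension two -/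

/-- Simultaneous recurrence: a positive multiple of `(x, y)` lies close to the integer lattice. -/
theorem exists_return (x y : ℝ) {ε : ℝ} (hε : 0 < ε) :
    ∃ M : ℕ, 0 < M ∧ ∃ p q : ℤ, |M * x - p| < ε ∧ |M * y - q| < ε := by
  have hc : IsCompact (Set.Icc (0 : ℝ × ℝ) 1) := isCompact_Icc
  let f : ℕ → ℝ × ℝ := fun n => (Int.fract (n * x), Int.fract (n * y))
  have hf : ∀ n, f n ∈ Set.Icc (0 : ℝ × ℝ) 1 := fun n =>
    ⟨⟨Int.fract_nonneg _, Int.fract_nonneg _⟩, ⟨(Int.fract_lt_one _).le, (Int.fract_lt_one _).le⟩⟩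
  obtain ⟨l, -, φ, hφ, hl⟩ := hc.tendsto_subseq hf
  obtain ⟨N, hN⟩ := Metric.cauchySeq_iff'.1 hl.cauchySeq ε hε
  have h1 := hN (N + 1) (Nat.le_succ N)
  have hlt : φ N < φ (N + 1) := hφ (Nat.lt_succ_self N)
  rw [Prod.dist_eq, max_lt_iff, Real.dist_eq, Real.dist_eq] at h1
  refine ⟨φ (N + 1) - φ N, Nat.sub_pos_of_lt hlt, ⌊φ (N + 1) * x⌋ - ⌊φ N * x⌋,
    ⌊φ (N + 1) * y⌋ - ⌊φ N * y⌋, ?_, ?_⟩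
  · have e : ((φ (N + 1) - φ N : ℕ) : ℝ) * x - ((⌊φ (N + 1) * x⌋ - ⌊φ N * x⌋ : ℤ) : ℝ) =
        Int.fract (φ (N + 1) * x) - Int.fract (φ N * x) := by
      simp only [Int.fract]
      push_cast [Nat.cast_sub hlt.le]; ring
    rw [e]; exact h1.1
  · have e : ((φ (N + 1) - φ N : ℕ) : ℝ) * y - ((⌊φ (N + 1) * y⌋ - ⌊φ N * y⌋ : ℤ) : ℝ) =
        Int.fract (φ (N + 1) * y) - Int.fract (φ N * y) := by
      simp only [Int.fract]
      push_cast [Nat.cast_sub hlt.le]; ring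
    rw [e]; exact h1.2

/-- Membership of `(u, v)` in the group generated by `(x, y)` and the integer lattice. -/
def InGroup (x y u v : ℝ) : Prop := ∃ n p q : ℤ, u = n * x - p ∧ v = n * y - q

theorem InGroup.comb {x y u v u' v' : ℝ} (h : InGroup x y u v) (h' : InGroup x y u' v') (m : ℤ) :
    InGroup x y (u + m * u') (v + m * v') := by
  obtain ⟨n, p, q, rfl, rfl⟩ := h
  obtain ⟨n', p', q', rfl, rfl⟩ := h'
  exact ⟨n + m * n', p + m * p', q + m * q', by push_cast; ring, by push_cast; ring⟩

/-- The group contains two linearly independent vectors that are arbitrarily small. If all small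
vectors were on one line, the linear form vanishing on that line would have discrete values on the
group, which gives an integral relation between `1`, `x` and `y`. -/
theorem exists_small_pair {x y : ℝ}
    (h : ∀ p q r : ℤ, (p : ℝ) * x + q * y = r → p = 0 ∧ q = 0) {ε : ℝ} (hε : 0 < ε) :
    ∃ u v u' v', InGroup x y u v ∧ InGroup x y u' v' ∧ |u| < ε ∧ |v| < ε ∧ |u'| < ε ∧ |v'| < ε ∧
      u * v' - v * u' ≠ 0 := by
  by_contra hcon
  have hall : ∀ u v u' v', InGroup x y u v → InGroup x y u' v' → |u| < ε → |v| < ε → |u'| < ε →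
      |v'| < ε → u * v' - v * u' = 0 := by
    intro u v u' v' h1 h2 h3 h4 h5 h6
    by_contra hne
    exact hcon ⟨u, v, u', v', h1, h2, h3, h4, h5, h6, hne⟩
  -- a nonzero group vector much smaller than `ε`
  obtain ⟨M, hM, p, q, hp, hq⟩ := exists_return x y (half_pos hε)
  set u : ℝ := M * x - p with hu
  set v : ℝ := M * y - q with hv
  have hg : InGroup x y u v := ⟨M, p, q, by simp [hu], by simp [hv]⟩
  have hu0 : u ≠ 0 := by
    intro h0
    have := (h M 0 p (by push_cast; linarith)).1
    omega
  -- the values of the form `det((u, v), ·)` on the group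
  let H : AddSubgroup ℝ :=
    { carrier := {c | ∃ s t, InGroup x y s t ∧ c = u * t - v * s}
      zero_mem' := ⟨0, 0, ⟨0, 0, 0, by simp, by simp⟩, by simp⟩
      add_mem' := by
        rintro _ _ ⟨s, t, h1, rfl⟩ ⟨s', t', h2, rfl⟩
        exact ⟨_, _, h1.comb h2 1, by push_cast; ring⟩
      neg_mem' := by
        rintro _ ⟨s, t, h1, rfl⟩
        have h0 : InGroup x y 0 0 := ⟨0, 0, 0, by simp, by simp⟩
        exact ⟨_, _, h0.comb h1 (-1), by push_cast; ring⟩ }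
  have hiso : Disjoint (H : Set ℝ) (Set.Ioo 0 (|u| * (ε / 2))) := by
    rw [Set.disjoint_left]
    rintro c ⟨s, t, hst, rfl⟩ ⟨hc0, hc1⟩
    -- subtract the multiple of `(u, v)` that makes the first coordinate smaller than `|u|`
    have hin := hst.comb hg (-⌊s / u⌋)
    set r := Int.fract (s / u) with hr
    have hs : s + ((-⌊s / u⌋ : ℤ) : ℝ) * u = r * u := by
      have : (⌊s / u⌋ : ℝ) = s / u - r := by rw [hr, Int.fract]; ring
      push_cast; rw [this]; field_simp; ring
    have ht : t + ((-⌊s / u⌋ : ℤ) : ℝ) * v = r * v + (u * t - v * s) / u := by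
      have : (⌊s / u⌋ : ℝ) = s / u - r := by rw [hr, Int.fract]; ring
      push_cast; rw [this]; field_simp; ring
    have hr0 : 0 ≤ r := Int.fract_nonneg _
    have hr1 : r < 1 := Int.fract_lt_one _
    have hb : |(u * t - v * s) / u| < ε / 2 := by
      rw [abs_div, div_lt_iff₀ (abs_pos.2 hu0), abs_of_pos hc0, mul_comm (ε / 2)]
      exact hc1
    have hr' : |r| ≤ 1 := by rw [abs_of_nonneg hr0]; exact hr1.le
    have b1 : |r * u| < ε := by
      rw [abs_mul]; nlinarith [abs_nonneg u, abs_nonneg r]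
    have b2 : |r * v + (u * t - v * s) / u| < ε := by
      have : |r * v| < ε / 2 := by
        rw [abs_mul]; nlinarith [abs_nonneg v, abs_nonneg r]
      linarith [abs_add_le (r * v) ((u * t - v * s) / u)]
    have := hall u v _ _ hg hin (by linarith) (by linarith) (by rw [hs]; exact b1)
      (by rw [ht]; exact b2)
    rw [hs, ht] at this
    have e : u * (r * v + (u * t - v * s) / u) - v * (r * u) = u * t - v * s := by
      field_simp; ring
    rw [e] at this
    linarith
  obtain ⟨c, hc⟩ := AddSubgroup.cyclic_of_isolated_zero (mul_pos (abs_pos.2 hu0) (half_pos hε)) hiso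
  have hmem : ∀ d, (∃ s t, InGroup x y s t ∧ d = u * t - v * s) → ∃ n : ℤ, d = n * c := by
    intro d hd
    have : d ∈ H := hd
    rw [hc, AddSubgroup.mem_closure_singleton] at this
    obtain ⟨n, hn⟩ := this
    exact ⟨n, by rw [← hn]; simp⟩
  obtain ⟨n1, e1⟩ := hmem (-v) ⟨1, 0, ⟨0, -1, 0, by simp, by simp⟩, by ring⟩
  obtain ⟨n2, e2⟩ := hmem u ⟨0, 1, ⟨0, 0, -1, by simp, by simp⟩, by ring⟩
  obtain ⟨n3, e3⟩ := hmem (u * y - v * x) ⟨x, y, ⟨1, 0, 0, by simp, by simp⟩, rfl⟩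
  have hc0 : c ≠ 0 := by rintro rfl; simp at e2; exact hu0 e2
  have := (h n1 n2 n3 (mul_right_cancel₀ hc0 (by rw [← e3]; linear_combination (-x) * e1 - y * e2))).2
  apply hu0
  rw [e2, this]; simp

/-- Kronecker's theorem for `1, x, y`. -/
theorem kronecker_two {x y : ℝ}
    (h : ∀ p q r : ℤ, (p : ℝ) * x + q * y = r → p = 0 ∧ q = 0) (s t : ℝ) {ε : ℝ} (hε : 0 < ε) :
    ∃ n : ℕ, ∃ p q : ℤ, |n * x - p - s| < ε ∧ |n * y - q - t| < ε := by
  -- approximation with an integer multiple of either sign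
  obtain ⟨n, p, q, h1, h2⟩ : ∃ n p q : ℤ, |n * x - p - s| < ε / 2 ∧ |n * y - q - t| < ε / 2 := by
    obtain ⟨u, v, u', v', hg, hg', h1, h2, h3, h4, hd⟩ := exists_small_pair h
      (show 0 < ε / 4 by positivity)
    set d := u * v' - v * u' with hdd
    -- coordinates of `(s, t)` in the basis of the two small vectors
    set A := (s * v' - t * u') / d with hA
    set B := (u * t - v * s) / d with hB
    have es : s = A * u + B * u' := by
      rw [hA, hB]; field_simp; rw [hdd]; ring
    have et : t = A * v + B * v' := by
      rw [hA, hB]; field_simp; rw [hdd]; ring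
    have h0 : InGroup x y 0 0 := ⟨0, 0, 0, by simp, by simp⟩
    obtain ⟨n, p, q, e1, e2⟩ := (h0.comb hg ⌊A⌋).comb hg' ⌊B⌋
    have bound : ∀ w w' : ℝ, |w| < ε / 4 → |w'| < ε / 4 →
        |0 + (⌊A⌋ : ℝ) * w + ⌊B⌋ * w' - (A * w + B * w')| < ε / 2 := by
      intro w w' hw hw'
      have : 0 + (⌊A⌋ : ℝ) * w + ⌊B⌋ * w' - (A * w + B * w') =
          -(Int.fract A * w + Int.fract B * w') := by
        simp only [Int.fract]; ring
      rw [this, abs_neg]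
      have b1 := abs_add_le (Int.fract A * w) (Int.fract B * w')
      rw [abs_mul, abs_mul, abs_of_nonneg (Int.fract_nonneg A),
        abs_of_nonneg (Int.fract_nonneg B)] at b1
      nlinarith [Int.fract_nonneg A, Int.fract_nonneg B, Int.fract_lt_one A, Int.fract_lt_one B,
        abs_nonneg w, abs_nonneg w']
    refine ⟨n, p, q, ?_, ?_⟩
    · rw [← e1, es]; exact bound u u' h1 h3
    · rw [← e2, et]; exact bound v v' h2 h4
  -- add a multiple of a return time to make the coefficient nonnegative
  obtain ⟨K, hKn⟩ : ∃ K : ℕ, -n ≤ K := ⟨n.natAbs, by omega⟩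
  have hK : (0 : ℝ) < K + 1 := by positivity
  obtain ⟨M, hM, p', q', hp, hq⟩ := exists_return x y (div_pos (half_pos hε) hK)
  rw [lt_div_iff₀ hK] at hp hq
  have hnn : 0 ≤ n + K * M := by
    have : (K : ℤ) ≤ K * M := by
      have : (1 : ℤ) ≤ M := by exact_mod_cast hM
      nlinarith [Int.natCast_nonneg K]
    omega
  refine ⟨(n + K * M).toNat, p + K * p', q + K * q', ?_, ?_⟩
  all_goals
    have hcast : (((n + K * M).toNat : ℕ) : ℝ) = n + K * M := by
      have := Int.toNat_of_nonneg hnn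
      have h2 : (((n + K * M).toNat : ℤ) : ℝ) = ((n + K * M : ℤ) : ℝ) := by rw [this]
      push_cast at h2
      simpa using h2
    rw [hcast]
    have hnb : (0 : ℝ) ≤ K := by positivity
  · have e : ((n : ℝ) + K * M) * x - ((p + K * p' : ℤ) : ℝ) - s =
        (n * x - p - s) + K * (M * x - p') := by push_cast; ring
    rw [e]
    have b := abs_add_le (n * x - p - s) (K * (M * x - p'))
    rw [abs_mul, abs_of_nonneg hnb] at b
    nlinarith [abs_nonneg (M * x - p')]
  · have e : ((n : ℝ) + K * M) * y - ((q + K * q' : ℤ) : ℝ) - t =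
        (n * y - q - t) + K * (M * y - q') := by push_cast; ring
    rw [e]
    have b := abs_add_le (n * y - q - t) (K * (M * y - q'))
    rw [abs_mul, abs_of_nonneg hnb] at b
    nlinarith [abs_nonneg (M * y - q')]

/-! ### Cutting sequences -/

/-- The last time up to `s` at which coordinate `i` of `m + s ω` was an integer. -/
noncomputable def lastCross (m ω : Fin 3 → ℝ) (s : ℝ) : Fin 3 → ℝ :=
  fun i => (⌊m i + s * ω i⌋ - m i) * (ω i)⁻¹

/-- The left ends of the intervals between crossings; the ray starts at time `0`. -/
def startTime (t : ℕ → ℝ) : ℕ → ℝ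
  | 0 => 0
  | k + 1 => t k

theorem consistent_lastCross {m ω : Fin 3 → ℝ} (hω : ∀ i, 0 < ω i) (s : ℝ) :
    Consistent (fun i => (ω i)⁻¹) (lastCross m ω s) := by
  intro i j
  have h1 : lastCross m ω s i ≤ s := by
    rw [lastCross, ← div_eq_mul_inv, div_le_iff₀ (hω i)]
    linarith [Int.floor_le (m i + s * ω i)]
  have h2 : s < lastCross m ω s j + (ω j)⁻¹ := by
    have : lastCross m ω s j + (ω j)⁻¹ = (⌊m j + s * ω j⌋ - m j + 1) / ω j := by
      rw [lastCross, div_eq_mul_inv]; ring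
    rw [this, lt_div_iff₀ (hω j)]
    linarith [Int.lt_floor_add_one (m j + s * ω j)]
  linarith

theorem floor_eq_of_no_crossing {m ω : Fin 3 → ℝ} (hω : ∀ i, 0 < ω i) {s s' : ℝ} (h : s ≤ s')
    (i : Fin 3) (hno : ∀ r, s < r → r ≤ s' → ¬ crossingAt m ω r i) :
    ⌊m i + s' * ω i⌋ = ⌊m i + s * ω i⌋ := by
  have hmono : m i + s * ω i ≤ m i + s' * ω i := by
    linarith [mul_le_mul_of_nonneg_right h (hω i).le]
  refine le_antisymm ?_ (Int.floor_le_floor hmono)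
  by_contra hlt
  push Not at hlt
  have h1 := Int.lt_floor_add_one (m i + s * ω i)
  have h2 : ((⌊m i + s * ω i⌋ + 1 : ℤ) : ℝ) ≤ m i + s' * ω i :=
    Int.le_floor.1 (Int.add_one_le_iff.2 hlt)
  push_cast at h2
  refine hno ((⌊m i + s * ω i⌋ + 1 - m i) / ω i) ?_ ?_ ⟨⌊m i + s * ω i⌋ + 1, ?_⟩
  · rw [lt_div_iff₀ (hω i)]; linarith
  · rw [div_le_iff₀ (hω i)]; linarith
  · rw [div_mul_cancel₀ _ (hω i).ne']; push_cast; ring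

theorem floor_eq_add_one_of_crossing {m ω : Fin 3 → ℝ} (hω : ∀ i, 0 < ω i) {s s' : ℝ} (h : s < s')
    (i : Fin 3) (hno : ∀ r, s < r → r < s' → ¬ crossingAt m ω r i) (hc : crossingAt m ω s' i) :
    ⌊m i + s' * ω i⌋ = ⌊m i + s * ω i⌋ + 1 := by
  obtain ⟨k, hk⟩ := hc
  have hlt : m i + s * ω i < k := by
    rw [← hk]; linarith [mul_lt_mul_of_pos_right h (hω i)]
  rw [hk, Int.floor_intCast]
  have : ⌊m i + s * ω i⌋ = k - 1 := by
    rw [Int.floor_eq_iff]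
    push_cast
    refine ⟨?_, by linarith⟩
    by_contra hcon
    push Not at hcon
    refine hno ((k - 1 - m i) / ω i) ?_ ?_ ⟨k - 1, ?_⟩
    · rw [lt_div_iff₀ (hω i)]; linarith
    · rw [div_lt_iff₀ (hω i)]; linarith
    · rw [div_mul_cancel₀ _ (hω i).ne']; push_cast; ring
  omega

theorem no_crossing {m ω : Fin 3 → ℝ} {t : ℕ → ℝ} (ht : StrictMono t) (hpos : ∀ n, 0 < t n)
    (hcr : ∀ s : ℝ, 0 < s → ((∃ i, crossingAt m ω s i) ↔ ∃ n, t n = s)) (k : ℕ) (i : Fin 3)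
    (r : ℝ) (h1 : startTime t k < r) (h2 : r < t k) : ¬ crossingAt m ω r i := by
  intro hc
  have hs : 0 ≤ startTime t k := by
    cases k with
    | zero => exact le_rfl
    | succ k => exact (hpos k).le
  obtain ⟨n, hn⟩ := (hcr r (by linarith)).1 ⟨i, hc⟩
  rw [← hn] at h2 h1
  have hnk := ht.lt_iff_lt.1 h2
  cases k with
  | zero => omega
  | succ k =>
    have := ht.lt_iff_lt.1 (show t k < t n from h1)
    omega

theorem startTime_lt {t : ℕ → ℝ} (ht : StrictMono t) (hpos : ∀ n, 0 < t n) (k : ℕ) :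
    startTime t k < t k := by
  cases k with
  | zero => exact hpos 0
  | succ k => exact ht (Nat.lt_succ_self k)

theorem lastCross_step {m ω : Fin 3 → ℝ} (hω : ∀ i, 0 < ω i) (hadm : Admissible m ω) {t : ℕ → ℝ}
    {u : ℕ → Fin 3} (ht : StrictMono t) (hpos : ∀ n, 0 < t n)
    (hcr : ∀ s : ℝ, 0 < s → ((∃ i, crossingAt m ω s i) ↔ ∃ n, t n = s))
    (hu : ∀ n, crossingAt m ω (t n) (u n)) (k : ℕ) :
    lastCross m ω (startTime t (k + 1)) =
      lastCross m ω (startTime t k) + Pi.single (u k) (ω (u k))⁻¹ := by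
  have hlt := startTime_lt ht hpos k
  have hno := no_crossing ht hpos hcr k
  ext i
  by_cases hi : i = u k
  · subst hi
    have := floor_eq_add_one_of_crossing hω hlt (u k) (hno (u k)) (hu k)
    simp only [startTime, lastCross, Pi.add_apply, Pi.single_eq_same, this]
    push_cast; ring
  · have := floor_eq_of_no_crossing (m := m) hω hlt.le i (fun r h1 h2 => by
      rcases h2.lt_or_eq with h | h
      · exact hno i r h1 h
      · intro hc
        rw [h] at hc
        exact hi (hadm _ (hpos k) _ _ hc (hu k)))
    simp [startTime, lastCross, hi, this]

/-- Every factor of a cutting sequence is realised from the state at its starting time. -/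
theorem feas_factor {m ω : Fin 3 → ℝ} (hω : ∀ i, 0 < ω i) (hadm : Admissible m ω) {t : ℕ → ℝ}
    {u : ℕ → Fin 3} (ht : StrictMono t) (hpos : ∀ n, 0 < t n)
    (hcr : ∀ s : ℝ, 0 < s → ((∃ i, crossingAt m ω s i) ↔ ∃ n, t n = s))
    (hu : ∀ n, crossingAt m ω (t n) (u n)) (n k : ℕ) :
    Feas (fun i => (ω i)⁻¹) (List.ofFn fun j : Fin n => u (k + j))
      (lastCross m ω (startTime t k)) := by
  induction n generalizing k with
  | zero => simpa [Feas] using consistent_lastCross hω _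
  | succ n ih =>
    rw [List.ofFn_succ]
    refine ⟨consistent_lastCross hω _, ?_⟩
    have := ih (k + 1)
    rw [lastCross_step hω hadm ht hpos hcr hu k] at this
    have e : (fun j : Fin n => u (k + ((j.succ : Fin (n + 1)) : ℕ))) = fun j : Fin n =>
        u (k + 1 + j) := by
      ext j; congr 2; simp; omega
    simpa only [e, Fin.val_zero, add_zero] using this

/-- The last crossing times are constant between consecutive crossings, hence every state on the ray
is the state just after some crossing or at the start. -/
theorem exists_interval {m ω : Fin 3 → ℝ} (hω : ∀ i, 0 < ω i) {t : ℕ → ℝ} (ht : StrictMono t)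
    (hpos : ∀ n, 0 < t n)
    (hcr : ∀ s : ℝ, 0 < s → ((∃ i, crossingAt m ω s i) ↔ ∃ n, t n = s)) {s : ℝ} (hs : 0 ≤ s) :
    ∃ k, lastCross m ω s = lastCross m ω (startTime t k) := by
  have hex : ∃ n, s < t n := by
    have hgt : s < (⌊m 0 + s * ω 0⌋ + 1 - m 0) / ω 0 := by
      rw [lt_div_iff₀ (hω 0)]; linarith [Int.lt_floor_add_one (m 0 + s * ω 0)]
    obtain ⟨n, hn⟩ := (hcr _ (hs.trans_lt hgt)).1 ⟨0, ⌊m 0 + s * ω 0⌋ + 1, by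
      rw [div_mul_cancel₀ _ (hω 0).ne']; push_cast; ring⟩
    exact ⟨n, hn ▸ hgt⟩
  classical
  have hk := Nat.find_spec hex
  have hmin := fun j => Nat.find_min hex (m := j)
  set k := Nat.find hex
  have hle : startTime t k ≤ s := by
    rcases hk0 : k with _ | j
    · exact hs
    · exact not_lt.1 (hmin j (by omega))
  refine ⟨k, ?_⟩
  ext i
  have := floor_eq_of_no_crossing (m := m) hω hle i
    (fun r h1 h2 => no_crossing ht hpos hcr k i r h1 (h2.trans_lt hk))
  simp [lastCross, this]

/-- The orbit of the origin comes close to every point of the torus. -/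
theorem orbit_dense {ω : Fin 3 → ℝ} (hω : ∀ i, 0 < ω i)
    (h : ∀ p q r : ℤ, (p : ℝ) * (ω 1 / ω 0) + q * (ω 2 / ω 0) = r → p = 0 ∧ q = 0)
    (θ : Fin 3 → ℝ) (hθ : 0 ≤ θ 0) {δ : ℝ} (hδ : 0 < δ) :
    ∃ s : ℝ, 0 ≤ s ∧ ∃ q : Fin 3 → ℤ, ∀ i, |s * ω i - q i - θ i| < δ := by
  obtain ⟨n, p, q, h1, h2⟩ := kronecker_two h (θ 1 - θ 0 * (ω 1 / ω 0))
    (θ 2 - θ 0 * (ω 2 / ω 0)) hδ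
  have h0 := hω 0
  refine ⟨(n + θ 0) / ω 0, by positivity, ![(n : ℤ), p, q], fun i => ?_⟩
  fin_cases i
  · simp [h0.ne', hδ]
  · have e : (n + θ 0) / ω 0 * ω 1 - p - θ 1 =
        n * (ω 1 / ω 0) - p - (θ 1 - θ 0 * (ω 1 / ω 0)) := by field_simp; ring
    simpa [e] using h1
  · have e : (n + θ 0) / ω 0 * ω 2 - q - θ 2 =
        n * (ω 2 / ω 0) - q - (θ 2 - θ 0 * (ω 2 / ω 0)) := by field_simp; ring
    simpa [e] using h2

/-- By density, every realisable word is realised from a state on the orbit of the origin. -/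
theorem exists_orbit_state {ω : Fin 3 → ℝ} (hω : ∀ i, 0 < ω i)
    (h : ∀ p q r : ℤ, (p : ℝ) * (ω 1 / ω 0) + q * (ω 2 / ω 0) = r → p = 0 ∧ q = 0)
    {w : List (Fin 3)} (hw : ∃ z, Feas (fun i => (ω i)⁻¹) w z) :
    ∃ s, 0 ≤ s ∧ Feas (fun i => (ω i)⁻¹) w (lastCross 0 ω s) := by
  obtain ⟨z, hz⟩ := hw
  obtain ⟨ε, hε, hball⟩ := Metric.isOpen_iff.1 (isOpen_feas _ w) z hz
  -- a time `τ` between the last and the next crossings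
  obtain ⟨τ, hτ1, hτ2⟩ : ∃ τ, (∀ i, z i < τ) ∧ ∀ i, τ < z i + (ω i)⁻¹ := by
    obtain ⟨i, hi⟩ := Finite.exists_max z
    obtain ⟨j, hj⟩ := Finite.exists_min fun j => z j + (ω j)⁻¹
    obtain ⟨τ, h1, h2⟩ := exists_between (hz.consistent i j)
    exact ⟨τ, fun l => (hi l).trans_lt h1, fun l => h2.trans_le (hj l)⟩
  set θ : Fin 3 → ℝ := fun i => (τ - z i) * ω i with hθ
  have hθ0 : ∀ i, 0 < θ i := fun i => mul_pos (sub_pos.2 (hτ1 i)) (hω i)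
  have hθ1 : ∀ i, θ i < 1 := by
    intro i
    have h1 : τ - z i < (ω i)⁻¹ := by linarith [hτ2 i]
    calc θ i < (ω i)⁻¹ * ω i := mul_lt_mul_of_pos_right h1 (hω i)
      _ = 1 := inv_mul_cancel₀ (hω i).ne'
  obtain ⟨δ, hδ, hδ0⟩ : ∃ δ : ℝ, (∀ i, δ < θ i ∧ δ < 1 - θ i ∧ δ < ε * ω i) ∧ 0 < δ := by
    have h1 : ∀ c : ℝ, 0 < c → ∀ᶠ δ in 𝓝[>] (0 : ℝ), δ < c := fun c hc =>
      (eventually_lt_nhds hc).filter_mono nhdsWithin_le_nhds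
    have h2 : ∀ᶠ δ in 𝓝[>] (0 : ℝ), ∀ i, δ < θ i ∧ δ < 1 - θ i ∧ δ < ε * ω i :=
      eventually_all.2 fun i => (h1 _ (hθ0 i)).and ((h1 _ (sub_pos.2 (hθ1 i))).and
        (h1 _ (mul_pos hε (hω i))))
    exact (h2.and (self_mem_nhdsWithin : Set.Ioi (0 : ℝ) ∈ 𝓝[>] 0)).exists
  obtain ⟨s, hs, q, hq⟩ := orbit_dense hω h θ (hθ0 0).le hδ0
  refine ⟨s, hs, (feas_shift w _ (τ - s)).1 (hball ?_)⟩
  rw [Metric.mem_ball, dist_pi_lt_iff hε]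
  intro i
  obtain ⟨d1, d2, d3⟩ := hδ i
  have hqi := abs_lt.1 (hq i)
  have hfl : ⌊(0 : Fin 3 → ℝ) i + s * ω i⌋ = q i := by
    rw [Int.floor_eq_iff]
    simp only [Pi.zero_apply, zero_add]
    constructor <;> linarith
  have e : lastCross 0 ω s i + (τ - s) - z i = -(s * ω i - q i - θ i) / ω i := by
    have := (hω i).ne'
    rw [lastCross, hfl, hθ]
    simp only [Pi.zero_apply]
    field_simp; ring
  rw [Real.dist_eq, e, abs_div, abs_neg, abs_of_pos (hω i), div_lt_iff₀ (hω i)]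
  linarith [hq i]

theorem admissible_zero {ω : Fin 3 → ℝ} (hω : ∀ i, 0 < ω i) (hI : Indep fun i => (ω i)⁻¹) :
    Admissible 0 ω := by
  rintro t ht i j ⟨p, hp⟩ ⟨q, hq⟩
  by_contra hij
  simp only [Pi.zero_apply, zero_add] at hp hq
  have := (hI.two hij (p := p) (q := q) (by
    rw [← hp, ← hq, mul_inv_cancel_right₀ (hω i).ne', mul_inv_cancel_right₀ (hω j).ne'])).1
  rw [this] at hp
  have := mul_pos ht (hω i)
  simp at hp
  rcases hp with h | h
  · linarith
  · exact (hω i).ne' h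

/-- The cutting sequence of the ray from the origin, built greedily from the counts `D n` of the first
`n` crossings. -/
theorem exists_cuttingSeq_zero {ω : Fin 3 → ℝ} (hω : ∀ i, 0 < ω i)
    (hI : Indep fun i => (ω i)⁻¹) : ∃ u, IsCuttingSeq 0 ω u := by
  have ha : ∀ i, 0 < (ω i)⁻¹ := fun i => inv_pos.2 (hω i)
  choose next hnext using exists_next hI
  obtain ⟨D, hD0, hD⟩ : ∃ D : ℕ → Fin 3 → ℕ, D 0 = 0 ∧
      ∀ n, D (n + 1) = D n + Pi.single (next (D n)) 1 :=
    ⟨fun n => Nat.rec 0 (fun _ d => d + Pi.single (next d) 1) n, rfl, fun n => rfl⟩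
  have hcons : ∀ n, Consistent (fun i => (ω i)⁻¹) (st (fun i => (ω i)⁻¹) 0 (D n)) := by
    intro n
    induction n with
    | zero =>
      rw [hD0, st_zero]; exact consistent_zero ha
    | succ n ih =>
      rw [hD, st_add_single, consistent_bump ha ih]
      intro j hj
      have := hnext (D n) j hj
      simp only [st, Pi.zero_apply]
      linarith
  have hsum : ∀ n, ∑ i, D n i = n := by
    intro n
    induction n with
    | zero => simp [hD0]
    | succ n ih => rw [hD]; simp [Finset.sum_add_distrib, ih]
  let t : ℕ → ℝ := fun n => ((D n (next (D n)) : ℝ) + 1) * (ω (next (D n)))⁻¹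
  have hmin : ∀ n j, t n ≤ (D n j + 1) * (ω j)⁻¹ := by
    intro n j
    by_cases hj : j = next (D n)
    · rw [hj]
    · exact (hnext (D n) j hj).le
  have htpos : ∀ n, 0 < t n := fun n => mul_pos (by positivity) (ha _)
  have hmono : StrictMono t := by
    refine strictMono_nat_of_lt_succ fun n => ?_
    by_cases hj : next (D (n + 1)) = next (D n)
    · have : t (n + 1) = (D n (next (D n)) + 1 + 1) * (ω (next (D n)))⁻¹ := by
        simp only [t]; rw [hj, hD]; simp
      rw [this]
      have := ha (next (D n))
      simp only [t]; linarith
    · have : t (n + 1) = (D n (next (D (n + 1))) + 1) * (ω (next (D (n + 1))))⁻¹ := by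
        simp only [t]
        have : D (n + 1) (next (D (n + 1))) = D n (next (D (n + 1))) := by
          rw [congrFun (hD n) (next (D (n + 1)))]
          simp [hj]
        rw [this]
      rw [this]
      exact hnext (D n) _ hj
  refine ⟨fun n => next (D n), t, hmono, htpos, ?_, ?_⟩
  · intro s hs
    constructor
    · rintro ⟨i, k, hk⟩
      simp only [Pi.zero_apply, zero_add] at hk
      have hkpos : 0 < k := by
        have := mul_pos hs (hω i)
        rw [hk] at this
        exact_mod_cast this
      obtain ⟨N, rfl⟩ : ∃ N : ℕ, k = N + 1 := ⟨(k - 1).toNat, by omega⟩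
      have hsN : s = (N + 1) * (ω i)⁻¹ := by
        rw [← div_eq_mul_inv, eq_div_iff (hω i).ne', hk]; push_cast; ring
      -- the count of family `i` is unbounded
      have hex : ∃ n, N < D n i := by
        by_contra hcon
        push Not at hcon
        obtain ⟨B, hB⟩ : ∃ B : ℕ, ∀ j, (N + 1) * (ω i)⁻¹ * ω j ≤ B := by
          obtain ⟨j, hj⟩ := Finite.exists_max fun j => ((N : ℝ) + 1) * (ω i)⁻¹ * ω j
          obtain ⟨B, hB⟩ := exists_nat_ge (((N : ℝ) + 1) * (ω i)⁻¹ * ω j)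
          exact ⟨B, fun l => (hj l).trans hB⟩
        have hbound : ∀ n j, D n j ≤ B := by
          intro n j
          have h1 := hcons n j i
          simp only [st, Pi.zero_apply, zero_add] at h1
          have h2 : (D n i : ℝ) ≤ N := by exact_mod_cast hcon n
          have h3 : (D n j : ℝ) * (ω j)⁻¹ < (N + 1) * (ω i)⁻¹ := by
            linarith [mul_le_mul_of_nonneg_right h2 (ha i).le]
          rw [← div_eq_mul_inv, div_lt_iff₀ (hω j)] at h3
          exact_mod_cast h3.le.trans (hB j)
        have h4 := hsum (3 * B + 1)
        rw [Fin.sum_univ_three] at h4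
        have := hbound (3 * B + 1) 0
        have := hbound (3 * B + 1) 1
        have := hbound (3 * B + 1) 2
        omega
      classical
      have hf := Nat.find_spec hex
      have hfm := fun j => Nat.find_min hex (m := j)
      rcases hn : Nat.find hex with _ | n
      · rw [hn] at hf; simp [hD0] at hf
      · rw [hn] at hf
        have hle := not_lt.1 (hfm n (by omega))
        have hni : i = next (D n) := by
          by_contra hne
          rw [hD] at hf
          simp [hne] at hf
          omega
        have hval : D n i = N := by
          rw [hD, hni] at hf
          simp at hf
          rw [← hni] at hf
          omega
        refine ⟨n, ?_⟩
        simp only [t]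
        rw [← hni, hval, hsN]
    · rintro ⟨n, rfl⟩
      refine ⟨next (D n), D n (next (D n)) + 1, ?_⟩
      simp only [t, Pi.zero_apply, zero_add]
      rw [inv_mul_cancel_right₀ (hω _).ne']; push_cast; rfl
  · intro n
    refine ⟨D n (next (D n)) + 1, ?_⟩
    simp only [t, Pi.zero_apply, zero_add]
    rw [inv_mul_cancel_right₀ (hω _).ne']; push_cast; rfl

open Classical in
theorem complexity_le {m ω : Fin 3 → ℝ} (hω : ∀ i, 0 < ω i) (hI : Indep fun i => (ω i)⁻¹)
    (hadm : Admissible m ω) {u : ℕ → Fin 3} (hu : IsCuttingSeq m ω u) (n : ℕ) :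
    complexity u n ≤ n ^ 2 + n + 1 := by
  obtain ⟨t, ht, hpos, hcr, huc⟩ := hu
  rw [← word_count (fun i => inv_pos.2 (hω i)) hI n, ← Finset.card_filter, complexity,
    ← Set.ncard_image_of_injective _ (List.ofFn_injective (n := n) (α := Fin 3)),
    ← Set.ncard_coe_finset]
  refine Set.ncard_le_ncard ?_ (Finset.finite_toSet _)
  rintro _ ⟨w, ⟨k, hk⟩, rfl⟩
  obtain rfl : w = fun j : Fin n => u (k + j) := funext hk
  simp only [Finset.coe_filter, Set.mem_ofPred_eq, mem_words, List.length_ofFn, true_and]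
  exact ⟨_, feas_factor hω hadm ht hpos hcr huc n k⟩

open Classical in
theorem complexity_ge {ω : Fin 3 → ℝ} (hω : ∀ i, 0 < ω i) (hI : Indep fun i => (ω i)⁻¹)
    (h : ∀ p q r : ℤ, (p : ℝ) * (ω 1 / ω 0) + q * (ω 2 / ω 0) = r → p = 0 ∧ q = 0)
    {u : ℕ → Fin 3} (hu : IsCuttingSeq 0 ω u) (n : ℕ) :
    n ^ 2 + n + 1 ≤ complexity u n := by
  obtain ⟨t, ht, hpos, hcr, huc⟩ := hu
  have ha : ∀ i, 0 < (ω i)⁻¹ := fun i => inv_pos.2 (hω i)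
  rw [← word_count ha hI n, ← Finset.card_filter, complexity,
    ← Set.ncard_image_of_injective _ (List.ofFn_injective (n := n) (α := Fin 3)),
    ← Set.ncard_coe_finset]
  refine Set.ncard_le_ncard ?_ (Set.toFinite _)
  intro w hw
  simp only [Finset.coe_filter, Set.mem_ofPred_eq, mem_words] at hw
  obtain ⟨s, hs, hf⟩ := exists_orbit_state hω h hw.2
  obtain ⟨k, hk⟩ := exists_interval hω ht hpos hcr hs
  rw [hk] at hf
  have hf' := feas_factor hω (admissible_zero hω hI) ht hpos hcr huc n k
  refine ⟨fun j => u (k + j), ⟨k, fun j => rfl⟩, ?_⟩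
  exact feas_unique ha hf' hf (by simp [hw.1])

theorem indep_inv {ω : Fin 3 → ℝ} (hω : ∀ i, 0 < ω i)
    (h : LinearIndependent ℚ ![(1 : ℝ), (ω 1 / ω 0)⁻¹, (ω 2 / ω 0)⁻¹]) :
    Indep fun i => (ω i)⁻¹ := by
  intro p hp
  rw [Fintype.linearIndependent_iff] at h
  have := h (fun i => (p i : ℚ)) (by
    rw [Fin.sum_univ_three] at hp ⊢
    simp only [Rat.smul_def, Matrix.cons_val_zero, Matrix.cons_val_one,
      Matrix.cons_val, Rat.cast_intCast]
    have h0 := (hω 0).ne'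
    calc _ = ω 0 * ((p 0 : ℝ) * (ω 0)⁻¹ + p 1 * (ω 1)⁻¹ + p 2 * (ω 2)⁻¹) := by
            rw [inv_div, inv_div]; field_simp
      _ = 0 := by rw [hp, mul_zero])
  ext i
  exact_mod_cast this i

theorem indep_dir {ω : Fin 3 → ℝ} (h : LinearIndependent ℚ ![(1 : ℝ), ω 1 / ω 0, ω 2 / ω 0])
    (p q r : ℤ) (e : (p : ℝ) * (ω 1 / ω 0) + q * (ω 2 / ω 0) = r) : p = 0 ∧ q = 0 := by
  rw [Fintype.linearIndependent_iff] at h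
  have := h ![-(r : ℚ), p, q] (by
    rw [Fin.sum_univ_three]
    simp only [Rat.smul_def, Matrix.cons_val_zero, Matrix.cons_val_one,
      Matrix.cons_val, Rat.cast_intCast, Rat.cast_neg]
    linarith)
  have h1 := this 1
  have h2 := this 2
  simp at h1 h2
  exact ⟨h1, h2⟩

end CubeBilliard

/-- Case (5): if both `1, α, β` and `1, α⁻¹, β⁻¹` are linearly independent over `ℚ`,
then `p(n, ω) = n² + n + 1` for every `n`. -/
theorem stmt4 (ω : Fin 3 → ℝ) (hpos : ∀ i, 0 < ω i)
    (hindep : LinearIndependent ℚ ![(1 : ℝ), ω 1 / ω 0, ω 2 / ω 0])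
    (hindep' : LinearIndependent ℚ ![(1 : ℝ), (ω 1 / ω 0)⁻¹, (ω 2 / ω 0)⁻¹]) :
    ∀ n : ℕ, pDir ω n = n ^ 2 + n + 1 := by
  intro n
  have hI := CubeBilliard.indep_inv hpos hindep'
  obtain ⟨u, hu⟩ := CubeBilliard.exists_cuttingSeq_zero hpos hI
  have hadm := CubeBilliard.admissible_zero hpos hI
  refine IsGreatest.csSup_eq ⟨⟨0, u, hadm, hu, le_antisymm ?_ ?_⟩, ?_⟩
  · exact CubeBilliard.complexity_ge hpos hI (CubeBilliard.indep_dir hindep) hu n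
  · exact CubeBilliard.complexity_le hpos hI hadm hu n
  · rintro _ ⟨m, v, hm, hv, rfl⟩
    exact CubeBilliard.complexity_le hpos hI hm hv n
end

section
/- Let ω = (ω₁,ω₂) ∈ ℝ² with ω₁ > 0 and ω₂ > 0, and suppose ω₂/ω₁ is irrational. Then for every admissible point m ∈ ℝ² and every integer n ≥ 0, the number of distinct factors of length n of the two-dimensional cutting-sequence word v_{m,ω} equals n + 1 (the word is Sturmian). -/
/-!
The word is a coding of an irrational rotation. Set `β = ω₁ / (ω₀ + ω₁)`, with coordinates
numbered from `0`. After `n` crossings let `A`, `B` be the integer parts of the two coordinates and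
`D = (A + 1 - m₀) ω₁ - (B + 1 - m₁) ω₀`. This measures the delay between the next crossings of the
two kinds; it lies in `(-ω₀, ω₁)`, increases by `ω₁` when the letter `0` is read and decreases by
`ω₀` when the letter `1` is read. Hence `y = (D + ω₀) / (ω₀ + ω₁) ∈ (0, 1)` satisfies
`y (n + 1) = y n + β - u n` (`exists_rotation`).

Consequently the sum of the `j` letters starting at `k` is `⌊y k + j β⌋`
(`sum_letters_eq_floor`), which exceeds `⌊j β⌋` by `1` exactly when `y k` is at least the cut point
`c j = 1 - fract (j β)`. So the factor of length `n` at `k` is equivalent to the set of the cut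
points `c 1, …, c n` that are at most `y k`. As `y k` varies these sets form a chain, so such a set
is determined by its cardinality, which lies in `{0, …, n}`. The cut points are distinct elements of
`(0, 1)` because `β` is irrational, and `y k = fract (y 0 + k β)` is dense in `(0, 1)`
(`exists_fract_mem_Ioo`), so each of the `n + 1` cardinalities occurs.
-/

open Filter Topology

/-- Coordinate `i` of `m + t • ω` is an integer at time `t` (planar case). -/
def crossingAt2 (m ω : Fin 2 → ℝ) (t : ℝ) (i : Fin 2) : Prop :=
  ∃ k : ℤ, m i + t * ω i = (k : ℝ)

/-- `m` is admissible for `ω`: the ray `{m + tω : t > 0}` contains no point with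
both coordinates integers. -/
def Admissible2 (m ω : Fin 2 → ℝ) : Prop :=
  ∀ t : ℝ, 0 < t → ∀ i j : Fin 2, crossingAt2 m ω t i → crossingAt2 m ω t j → i = j

/-- `u` is the cutting sequence of the ray from `m` in direction `ω` in the plane. -/
def IsCuttingSeq2 (m ω : Fin 2 → ℝ) (u : ℕ → Fin 2) : Prop :=
  ∃ t : ℕ → ℝ, StrictMono t ∧ (∀ n, 0 < t n) ∧
    (∀ s : ℝ, 0 < s → ((∃ i, crossingAt2 m ω s i) ↔ ∃ n, t n = s)) ∧
    (∀ n, crossingAt2 m ω (t n) (u n))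

/-- Factor complexity of an infinite word over two letters. -/
noncomputable def complexity2 (u : ℕ → Fin 2) (n : ℕ) : ℕ :=
  Set.ncard {w : Fin n → Fin 2 | ∃ k : ℕ, ∀ j : Fin n, w j = u (k + (j : ℕ))}

/-! ### From the billiard to a rotation -/

/-- The integer part of an increasing real quantity jumps by one when the first integer is reached,
and is constant as long as none is. -/
lemma floor_step {x y : ℝ} (hxy : x < y) (hno : ∀ z : ℝ, x < z → z < y → ¬ ∃ k : ℤ, z = k) :
    ((∃ k : ℤ, y = k) → ⌊y⌋ = ⌊x⌋ + 1) ∧ ((¬ ∃ k : ℤ, y = k) → ⌊y⌋ = ⌊x⌋) := by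
  have h1 := Int.floor_le x
  have h2 := Int.lt_floor_add_one x
  have hle : y ≤ ⌊x⌋ + 1 := by
    by_contra! h
    exact hno (⌊x⌋ + 1) h2 h ⟨⌊x⌋ + 1, by push_cast; ring⟩
  constructor
  · rintro ⟨k, rfl⟩
    have hk1 : k ≤ ⌊x⌋ + 1 := by exact_mod_cast hle
    have hk2 : ⌊x⌋ < k := Int.floor_lt.2 hxy
    rw [Int.floor_intCast]
    omega
  · intro hy
    rw [Int.floor_eq_iff]
    refine ⟨by linarith, lt_of_le_of_ne hle fun h => hy ⟨⌊x⌋ + 1, by rw [h]; push_cast; ring⟩⟩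

/-- A cutting sequence codes the rotation by `ω₁ / (ω₀ + ω₁)` on the unit interval: the letter read
is the integer part lost when the rotated point is brought back into the interval. -/
lemma exists_rotation {m ω : Fin 2 → ℝ} {u : ℕ → Fin 2} (h0 : 0 < ω 0) (h1 : 0 < ω 1)
    (hm : Admissible2 m ω) (hu : IsCuttingSeq2 m ω u) :
    ∃ y : ℕ → ℝ, (∀ n, 0 < y n ∧ y n < 1) ∧
      ∀ n, y (n + 1) = y n + ω 1 / (ω 0 + ω 1) - ((u n : ℕ) : ℤ) := by
  obtain ⟨t, tmono, tpos, hcross, hlet⟩ := hu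
  -- `s` lists time `0` followed by the crossing times.
  let s : ℕ → ℝ := fun n => Nat.casesOn n 0 t
  have hs0 : ∀ n, 0 ≤ s n := by
    rintro (_ | n)
    · exact le_rfl
    · exact (tpos n).le
  have hs1 : ∀ n, s n < s (n + 1) := by
    rintro (_ | n)
    · exact tpos 0
    · exact tmono (Nat.lt_succ_self n)
  have hgap : ∀ n r, s n < r → r < s (n + 1) → ∀ i, ¬ crossingAt2 m ω r i := by
    intro n r hr1 hr2 i hi
    obtain ⟨p, rfl⟩ := (hcross r ((hs0 n).trans_lt hr1)).1 ⟨i, hi⟩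
    have hp1 : p < n := tmono.lt_iff_lt.1 hr2
    cases n with
    | zero => omega
    | succ n =>
      have hp2 : n < p := tmono.lt_iff_lt.1 hr1
      omega
  have hωpos : ∀ i, 0 < ω i := by
    intro i; fin_cases i
    · exact h0
    · exact h1
  have hstep : ∀ n i, (u n = i → ⌊m i + s (n + 1) * ω i⌋ = ⌊m i + s n * ω i⌋ + 1) ∧
      (u n ≠ i → ⌊m i + s (n + 1) * ω i⌋ = ⌊m i + s n * ω i⌋) := by
    intro n i
    have hpos := hωpos i
    have key := floor_step (x := m i + s n * ω i) (y := m i + s (n + 1) * ω i)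
      (by have := mul_lt_mul_of_pos_right (hs1 n) hpos; linarith)
      (by
        rintro z hz1 hz2 ⟨k, hk⟩
        have hz : m i + (z - m i) / ω i * ω i = z := by field_simp; ring
        refine hgap n ((z - m i) / ω i) ?_ ?_ i ⟨k, by rw [hz, hk]⟩
        · rw [lt_div_iff₀ hpos]; linarith
        · rw [div_lt_iff₀ hpos]; linarith)
    refine ⟨fun h => key.1 (h ▸ hlet n), fun h => key.2 fun hc => h ?_⟩
    exact hm _ (tpos n) _ _ (hlet n) hc
  have hL : 0 < ω 0 + ω 1 := by linarith
  refine ⟨fun n => (((⌊m 0 + s n * ω 0⌋ : ℝ) + 1 - m 0) * ω 1 -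
    ((⌊m 1 + s n * ω 1⌋ : ℝ) + 1 - m 1) * ω 0 + ω 0) / (ω 0 + ω 1), fun n => ?_, fun n => ?_⟩
  · have a1 := mul_le_mul_of_nonneg_right (Int.floor_le (m 0 + s n * ω 0)) h1.le
    have a2 := mul_lt_mul_of_pos_right (Int.lt_floor_add_one (m 0 + s n * ω 0)) h1
    have b1 := mul_le_mul_of_nonneg_right (Int.floor_le (m 1 + s n * ω 1)) h0.le
    have b2 := mul_lt_mul_of_pos_right (Int.lt_floor_add_one (m 1 + s n * ω 1)) h0
    constructor
    · apply div_pos _ hL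
      nlinarith
    · rw [div_lt_one hL]
      nlinarith
  · have e0 := hstep n 0
    have e1 := hstep n 1
    have hcases : u n = 0 ∨ u n = 1 := by omega
    beta_reduce
    rcases hcases with h | h
    · rw [e0.1 h, e1.2 (by rw [h]; decide), h]
      simp
      field_simp
      ring
    · rw [e0.2 (by rw [h]; decide), e1.1 h, h]
      simp
      field_simp
      ring

/-! ### Floors and cut points -/

lemma sum_letters {y : ℕ → ℝ} {β : ℝ} {e : ℕ → ℤ} (hy : ∀ n, y (n + 1) = y n + β - e n)
    (k j : ℕ) : y k + j * β = y (k + j) + ((∑ i ∈ Finset.range j, e (k + i) : ℤ) : ℝ) := by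
  induction j with
  | zero => simp
  | succ j ih =>
    rw [Finset.sum_range_succ, ← add_assoc k j 1, hy]
    push_cast at ih ⊢
    linarith

lemma sum_letters_eq_floor {y : ℕ → ℝ} {β : ℝ} {e : ℕ → ℤ} (hy : ∀ n, y (n + 1) = y n + β - e n)
    (hy01 : ∀ n, 0 < y n ∧ y n < 1) (k j : ℕ) :
    ∑ i ∈ Finset.range j, e (k + i) = ⌊y k + j * β⌋ := by
  rw [sum_letters hy, Int.floor_add_intCast,
    Int.floor_eq_zero_iff.2 ⟨(hy01 _).1.le, (hy01 _).2⟩, zero_add]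

lemma floor_eq_ite {x a : ℝ} (hx0 : 0 ≤ x) (hx1 : x < 1) :
    ⌊x + a⌋ = ⌊a⌋ + if 1 - Int.fract a ≤ x then 1 else 0 := by
  have h1 := Int.floor_add_fract a
  have h2 := Int.fract_nonneg a
  have h3 := Int.fract_lt_one a
  split_ifs with h
  · rw [Int.floor_eq_iff]; push_cast; constructor <;> linarith
  · rw [Int.floor_eq_iff]; push_cast; constructor <;> linarith

/-- Forward orbits of an irrational rotation meet every subinterval of the unit interval. -/
lemma exists_fract_mem_Ioo {β : ℝ} (hβ : Irrational β) (x : ℝ) {a b : ℝ} (ha : 0 ≤ a) (hab : a < b)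
    (hb : b ≤ 1) : ∃ k : ℕ, Int.fract (x + k * β) ∈ Set.Ioo a b := by
  have hd : DenseRange (· • (β : AddCircle (1 : ℝ)) : ℕ → AddCircle (1 : ℝ)) :=
    denseRange_zsmul_iff_nsmul.1 (AddCircle.denseRange_zsmul_coe_iff.2 (by simpa using hβ))
  have ho : IsOpen ((fun z : AddCircle (1 : ℝ) => (x : AddCircle (1 : ℝ)) + z) ⁻¹'
      ((fun r : ℝ => (r : AddCircle (1 : ℝ))) '' Set.Ioo a b)) :=
    (QuotientAddGroup.isOpenMap_coe _ isOpen_Ioo).preimage (continuous_const_add _)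
  obtain ⟨k, r, hr, hk⟩ := hd.exists_mem_open ho
    ⟨(((a + b) / 2 - x : ℝ) : AddCircle (1 : ℝ)), (a + b) / 2,
      ⟨by linarith, by linarith⟩, by simp⟩
  refine ⟨k, ?_⟩
  have hk' : ((r : ℝ) : AddCircle (1 : ℝ)) = ((x + k * β : ℝ) : AddCircle (1 : ℝ)) := by
    simpa [nsmul_eq_mul] using hk
  obtain ⟨z, hz⟩ := AddCircle.coe_eq_zero_iff (1 : ℝ) |>.1
    (show ((x + k * β - r : ℝ) : AddCircle (1 : ℝ)) = 0 by
      rw [AddCircle.coe_sub, hk', sub_self])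
  have hxr : x + k * β = r + z := by
    rw [zsmul_eq_mul, mul_one] at hz
    linarith
  rwa [hxr, Int.fract_add_intCast, Int.fract_eq_self.2 ⟨ha.trans hr.1.le, hr.2.trans_le hb⟩]

/-! ### Counting -/

/-- A set of `N` points of `(0, T)` cuts this interval into `N + 1` nonempty open intervals; on the
`r`-th of them, counted from `0`, every point exceeds exactly `r` elements of the set. -/
lemma exists_interval_card (C : Finset ℝ) :
    ∀ T : ℝ, 0 < T → (∀ c ∈ C, 0 < c ∧ c < T) → ∀ r ≤ C.card, ∃ a b : ℝ, 0 ≤ a ∧ a < b ∧ b ≤ T ∧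
      ∀ x ∈ Set.Ioo a b, (C.filter (· ≤ x)).card = r := by
  induction C using Finset.induction_on_max with
  | empty =>
    intro T hT _ r hr
    refine ⟨0, T, le_rfl, hT, le_rfl, fun x _ => ?_⟩
    simp at hr
    simp [hr]
  | insert M C hM ih =>
    intro T hT hC r hr
    have hMC : M ∉ C := fun h => lt_irrefl _ (hM M h)
    have hM0 := hC M (Finset.mem_insert_self _ _)
    rw [Finset.card_insert_of_notMem hMC] at hr
    rcases Nat.lt_or_ge C.card r with h | h
    · refine ⟨M, T, hM0.1.le, hM0.2, le_rfl, fun x hx => ?_⟩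
      rw [Finset.filter_true_of_mem, Finset.card_insert_of_notMem hMC]
      · omega
      · intro c hc
        rcases Finset.mem_insert.1 hc with rfl | hc
        · exact hx.1.le
        · exact ((hM c hc).trans hx.1).le
    · obtain ⟨a, b, ha, hab, hb, hx⟩ := ih M hM0.1
        (fun c hc => ⟨(hC c (Finset.mem_insert_of_mem hc)).1, hM c hc⟩) r h
      refine ⟨a, b, ha, hab, hb.trans hM0.2.le, fun x hxx => ?_⟩
      rw [Finset.filter_insert, if_neg (by have := hxx.2; linarith)]
      exact hx x hxx

lemma ncard_range_eq_of_ker_eq {α β γ : Type*} {f : α → β} {g : α → γ}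
    (h : ∀ a b, f a = f b ↔ g a = g b) : (Set.range f).ncard = (Set.range g).ncard := by
  have e : Set.range f ≃ Set.range g :=
    (Setoid.quotientKerEquivRange f).symm.trans
      ((Quotient.congrRight h).trans (Setoid.quotientKerEquivRange g))
  exact Nat.card_congr e

/-- Two words agree on a block exactly when all their partial sums over it agree. -/
lemma forall_lt_eq_iff_sum_eq (f g : ℕ → ℤ) (n : ℕ) :
    (∀ i < n, f i = g i) ↔
      ∀ j ∈ Finset.Icc 1 n, ∑ i ∈ Finset.range j, f i = ∑ i ∈ Finset.range j, g i := by
  constructor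
  · intro h j hj
    refine Finset.sum_congr rfl fun i hi => h i ?_
    have := Finset.mem_range.1 hi
    have := Finset.mem_Icc.1 hj
    omega
  · intro h i hi
    have h' : ∀ j ≤ n, ∑ i ∈ Finset.range j, f i = ∑ i ∈ Finset.range j, g i := by
      intro j hj
      rcases Nat.eq_zero_or_pos j with rfl | hj0
      · simp
      · exact h j (Finset.mem_Icc.2 ⟨hj0, hj⟩)
    have h1 := h' (i + 1) hi
    rw [Finset.sum_range_succ, Finset.sum_range_succ, h' i hi.le] at h1
    exact add_left_cancel h1

/-- Square billiard, minimal case: if `ω₂/ω₁` is irrational, the cutting sequence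
of any admissible point is Sturmian: it has exactly `n + 1` factors of length `n`. -/
theorem stmt9 (ω : Fin 2 → ℝ) (h0 : 0 < ω 0) (h1 : 0 < ω 1)
    (hirr : Irrational (ω 1 / ω 0)) :
    ∀ m : Fin 2 → ℝ, ∀ u : ℕ → Fin 2, Admissible2 m ω → IsCuttingSeq2 m ω u →
      ∀ n : ℕ, complexity2 u n = n + 1 := by
  intro m u hm hu n
  obtain ⟨y, hy01, hy⟩ := exists_rotation h0 h1 hm hu
  set β := ω 1 / (ω 0 + ω 1) with hβdef
  have hβ : Irrational β := by
    have : β = ((ω 1 / ω 0)⁻¹ + (1 : ℕ))⁻¹ := by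
      rw [hβdef]; field_simp; simp
    rw [this]
    exact (hirr.inv.add_natCast 1).inv
  set e : ℕ → ℤ := fun n => ((u n : ℕ) : ℤ) with he
  have hyk : ∀ k : ℕ, Int.fract (y 0 + k * β) = y k := by
    intro k
    have := sum_letters (e := e) hy 0 k
    rw [zero_add] at this
    rw [this, Int.fract_add_intCast, Int.fract_eq_self.2 ⟨(hy01 k).1.le, (hy01 k).2⟩]
  let c : ℕ → ℝ := fun j => 1 - Int.fract (j * β)
  let C : Finset ℝ := (Finset.Icc 1 n).image c
  have hcinj : Function.Injective c := by
    intro i j hij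
    by_contra hne
    obtain ⟨z, hz⟩ := Int.fract_eq_fract.1 (sub_right_injective hij)
    have hne' : ((i : ℤ) - j) ≠ 0 := by omega
    apply (hβ.intCast_mul hne').ne_int z
    push_cast
    linarith
  have hc01 : ∀ x ∈ C, 0 < x ∧ x < 1 := by
    intro x hx
    obtain ⟨j, hj, rfl⟩ := Finset.mem_image.1 hx
    have hj0 : j ≠ 0 := by have := Finset.mem_Icc.1 hj; omega
    have hne : Int.fract ((j : ℝ) * β) ≠ 0 := by
      intro h
      obtain ⟨z, hz⟩ := Int.fract_eq_zero_iff.1 h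
      exact (hβ.natCast_mul hj0).ne_int z hz.symm
    have hpos := (Int.fract_nonneg ((j : ℝ) * β)).lt_of_ne' hne
    have hlt := Int.fract_lt_one ((j : ℝ) * β)
    constructor <;> simp only [c] <;> linarith
  have hCcard : C.card = n := by
    rw [Finset.card_image_of_injective _ hcinj]; simp
  let F : ℕ → Finset ℝ := fun k => C.filter (· ≤ y k)
  have hker : ∀ k l, (fun j : Fin n => u (k + j)) = (fun j : Fin n => u (l + j)) ↔
      (F k).card = (F l).card := by
    intro k l
    have hword : (fun j : Fin n => u (k + j)) = (fun j : Fin n => u (l + j)) ↔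
        ∀ i < n, e (k + i) = e (l + i) := by
      rw [funext_iff, Fin.forall_iff]
      simp only [he, Nat.cast_inj, Fin.val_inj]
    have hset : (∀ i < n, e (k + i) = e (l + i)) ↔ F k = F l := by
      rw [forall_lt_eq_iff_sum_eq (fun i => e (k + i)) (fun i => e (l + i)), Finset.filter_inj']
      simp only [C, Finset.forall_mem_image]
      refine forall₂_congr fun j _ => ?_
      rw [sum_letters_eq_floor hy hy01, sum_letters_eq_floor hy hy01,
        floor_eq_ite (hy01 k).1.le (hy01 k).2, floor_eq_ite (hy01 l).1.le (hy01 l).2]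
      simp only [c]
      split_ifs with p q q <;> simp only [p, q] <;> simp
    rw [hword, hset]
    refine ⟨congrArg _, fun h => ?_⟩
    -- The sets `F k` are lower segments of `C`, hence nested.
    have hmono : ∀ k l, y k ≤ y l → F k ⊆ F l := fun k l hkl =>
      Finset.monotone_filter_right _ fun x _ hx => le_trans hx hkl
    rcases le_total (y k) (y l) with hkl | hkl
    · exact Finset.eq_of_subset_of_card_le (hmono k l hkl) h.ge
    · exact (Finset.eq_of_subset_of_card_le (hmono l k hkl) h.le).symm
  have hrange : Set.range (fun k => (F k).card) = Set.Iic n := by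
    ext r
    constructor
    · rintro ⟨k, rfl⟩
      exact (Finset.card_filter_le _ _).trans hCcard.le
    · intro hr
      obtain ⟨a, b, ha, hab, hb, hx⟩ := exists_interval_card C 1 one_pos hc01 r (hr.trans hCcard.ge)
      obtain ⟨k, hk⟩ := exists_fract_mem_Ioo hβ (y 0) ha hab hb
      rw [hyk] at hk
      exact ⟨k, hx _ hk⟩
  have hfactors : {w : Fin n → Fin 2 | ∃ k : ℕ, ∀ j : Fin n, w j = u (k + (j : ℕ))} =
      Set.range fun k => fun j : Fin n => u (k + j) := by
    ext w
    simp only [Set.mem_ofPred_eq, Set.mem_range, funext_iff, eq_comm]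
  rw [complexity2, hfactors, ncard_range_eq_of_ker_eq hker, hrange]
  simp [Set.ncard_eq_toFinset_card']
end

section
/- Let ω = (ω₁,ω₂,ω₃) ∈ ℝ³ with ωᵢ > 0 for each i, and suppose ω₁, ω₂, ω₃ are linearly independent over ℚ (ω is a minimal direction). Then the complexity is independent of the initial point: for any two admissible points m and m' and every integer n ≥ 0, p(n,m,ω) = p(n,m',ω). -/
/-!
The two words have the same factors. The argument has two parts.

* **Kronecker density** (`exists_shift`): as `ω` is rationally independent, every half-orbit
  `{x + tω : t > 0}` is dense in the torus `ℝ³/ℤ³`. This is Weyl's argument: time averages of a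
  trigonometric polynomial along the orbit converge to its integral (`tendsto_mean_of_mem_span`),
  trigonometric polynomials are uniformly dense, and a nonzero nonnegative bump function has
  positive integral, so it cannot vanish along the whole orbit.

* **Stability of finite words** (`prefix_appears`): let `t` enumerate the crossing times of `m`.
  If `m' + Dω` is close to `m` modulo `ℤ³`, then the crossings of coordinate `i` by the two orbits
  correspond to each other under the time translation `r ↦ r + D + e i`, where `e i` is small and
  depends only on `i`. When the `e i` are small compared with the gaps between the first few crossing
  times of `m`, the corresponding crossings of `m'` occur in the same order with no other crossing
  between them. Hence every prefix of `u` occurs in `u'`, and so does every factor of `u`.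
-/


open Filter Topology

open MeasureTheory UnitAddTorus

/-! ### Density of the linear flow on the torus -/

/-- The point `tω` of the torus `ℝ³/ℤ³`. -/
def torusFlow (ω : Fin 3 → ℝ) (t : ℝ) : UnitAddTorus (Fin 3) :=
  fun i => ((t * ω i : ℝ) : UnitAddCircle)

/-- Normalized Haar measure on the torus `ℝ³/ℤ³`. -/
noncomputable def torusMeasure : Measure (UnitAddTorus (Fin 3)) :=
  Measure.pi (fun _ => AddCircle.haarAddCircle)

instance : IsProbabilityMeasure torusMeasure := by
  unfold torusMeasure; infer_instance

instance : torusMeasure.IsAddLeftInvariant := by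
  unfold torusMeasure; infer_instance

instance : torusMeasure.IsOpenPosMeasure := by
  unfold torusMeasure; infer_instance

lemma continuous_torusFlow (ω : Fin 3 → ℝ) : Continuous (torusFlow ω) := by
  refine continuous_pi fun i => ?_
  exact (AddCircle.continuous_mk' 1).comp (by fun_prop)

lemma mFourier_add_arg (n : Fin 3 → ℤ) (x y : UnitAddTorus (Fin 3)) :
    mFourier n (x + y) = mFourier n x * mFourier n y := by
  simp only [mFourier, ContinuousMap.coe_mk, Pi.add_apply, fourier_apply, smul_add,
    AddCircle.toCircle_add, Circle.coe_mul, Finset.prod_mul_distrib]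

lemma mFourier_torusFlow (ω : Fin 3 → ℝ) (n : Fin 3 → ℤ) (t : ℝ) :
    mFourier n (torusFlow ω t) =
      Complex.exp ((2 * Real.pi * Complex.I * ((∑ i, n i * ω i : ℝ) : ℂ)) * t) := by
  simp only [mFourier, ContinuousMap.coe_mk, torusFlow, fourier_coe_apply]
  rw [← Complex.exp_sum]
  congr 1
  simp only [Fin.sum_univ_three]
  push_cast
  ring

lemma frequency_ne_zero {ω : Fin 3 → ℝ} (hmin : LinearIndependent ℚ ω) {n : Fin 3 → ℤ}
    (hn : n ≠ 0) : (∑ i, n i * ω i : ℝ) ≠ 0 := by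
  intro h
  apply hn
  rw [Fintype.linearIndependent_iff] at hmin
  have := hmin (fun i => (n i : ℚ)) (by
    rw [← h]; refine Finset.sum_congr rfl fun i _ => ?_
    rw [Rat.smul_def]; simp)
  funext i
  exact_mod_cast this i

/-- A nontrivial character has integral zero: translating by a point where the character takes
the value `-1` changes the sign of the integral. -/
lemma integral_mFourier {ω : Fin 3 → ℝ} (hmin : LinearIndependent ℚ ω) {n : Fin 3 → ℤ}
    (hn : n ≠ 0) : ∫ y, mFourier n y ∂torusMeasure = 0 := by
  have hc := frequency_ne_zero hmin hn
  set c : ℝ := ∑ i, n i * ω i with hcdef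
  have h1 : mFourier n (torusFlow ω (1 / (2 * c))) = -1 := by
    rw [mFourier_torusFlow, ← hcdef, ← Complex.exp_pi_mul_I]
    congr 1
    have : (c : ℂ) ≠ 0 := by exact_mod_cast hc
    push_cast
    field_simp
  have h2 := integral_add_left_eq_self (μ := torusMeasure) (fun y => mFourier n y)
    (torusFlow ω (1 / (2 * c)))
  simp only [mFourier_add_arg, h1, neg_mul, one_mul, integral_neg] at h2
  linear_combination (-1 / 2 : ℂ) * h2

/-- Time averages of a character along the flow converge to its space average. -/
lemma tendsto_mean_mFourier {ω : Fin 3 → ℝ} (hmin : LinearIndependent ℚ ω)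
    (x : UnitAddTorus (Fin 3)) (n : Fin 3 → ℤ) :
    Tendsto (fun T : ℝ => (T : ℂ)⁻¹ * ∫ t in (0 : ℝ)..T, mFourier n (x + torusFlow ω t)) atTop
      (𝓝 (∫ y, mFourier n y ∂torusMeasure)) := by
  by_cases hn : n = 0
  · subst hn
    simp only [mFourier_zero, ContinuousMap.one_apply, integral_const, intervalIntegral.integral_const,
      probReal_univ, one_smul, sub_zero]
    refine tendsto_const_nhds.congr' ?_
    filter_upwards [eventually_gt_atTop 0] with T hT
    have : (T : ℂ) ≠ 0 := by exact_mod_cast hT.ne'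
    simp [this]
  · rw [integral_mFourier hmin hn]
    have hc := frequency_ne_zero hmin hn
    simp only [mFourier_add_arg, mFourier_torusFlow, intervalIntegral.integral_const_mul]
    set c : ℝ := ∑ i, n i * ω i
    set a : ℂ := 2 * Real.pi * Complex.I * (c : ℂ) with ha
    have ha0 : a ≠ 0 := by
      rw [ha]
      simp [hc, Real.pi_ne_zero]
    rw [tendsto_zero_iff_norm_tendsto_zero]
    have hlim : Tendsto (fun T : ℝ => T⁻¹ * (‖mFourier n x‖ * (2 / ‖a‖))) atTop (𝓝 0) := by
      simpa using tendsto_inv_atTop_zero.mul_const (‖mFourier n x‖ * (2 / ‖a‖))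
    refine squeeze_zero' (Eventually.of_forall fun _ => norm_nonneg _) ?_ hlim
    filter_upwards [eventually_gt_atTop 0] with T hT
    rw [integral_exp_mul_complex ha0]
    rw [norm_mul, norm_mul, norm_div, norm_inv, Complex.norm_real, Real.norm_of_nonneg hT.le]
    gcongr
    have hexp : ‖Complex.exp (a * T)‖ = 1 := by
      have : a * T = ((2 * Real.pi * c * T : ℝ) : ℂ) * Complex.I := by
        rw [ha]; push_cast; ring
      rw [this, Complex.norm_exp_ofReal_mul_I]
    calc _ ≤ ‖Complex.exp (a * T)‖ + ‖Complex.exp (a * (0 : ℝ))‖ := norm_sub_le _ _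
      _ = 2 := by rw [hexp]; simp; norm_num

lemma intervalIntegrable_flow (ω : Fin 3 → ℝ) (x : UnitAddTorus (Fin 3))
    (f : C(UnitAddTorus (Fin 3), ℂ)) (a b : ℝ) :
    IntervalIntegrable (fun t => f (x + torusFlow ω t)) volume a b :=
  (f.continuous.comp (continuous_const.add (continuous_torusFlow ω))).intervalIntegrable _ _

lemma integrable_torus (f : C(UnitAddTorus (Fin 3), ℂ)) : Integrable (fun y => f y) torusMeasure :=
  f.continuous.integrable_of_hasCompactSupport (HasCompactSupport.of_compactSpace _)

lemma tendsto_mean_of_mem_span {ω : Fin 3 → ℝ} (hmin : LinearIndependent ℚ ω)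
    (x : UnitAddTorus (Fin 3)) {f : C(UnitAddTorus (Fin 3), ℂ)}
    (hf : f ∈ Submodule.span ℂ (Set.range (mFourier (d := Fin 3)))) :
    Tendsto (fun T : ℝ => (T : ℂ)⁻¹ * ∫ t in (0 : ℝ)..T, f (x + torusFlow ω t)) atTop
      (𝓝 (∫ y, f y ∂torusMeasure)) := by
  induction hf using Submodule.span_induction with
  | mem f hf =>
    obtain ⟨n, rfl⟩ := hf
    exact tendsto_mean_mFourier hmin x n
  | zero => simp
  | add f g _ _ hf hg =>
    simp only [ContinuousMap.add_apply]
    rw [integral_add (integrable_torus f) (integrable_torus g)]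
    refine (hf.add hg).congr fun T => ?_
    rw [intervalIntegral.integral_add (intervalIntegrable_flow ..) (intervalIntegrable_flow ..)]
    ring
  | smul a f _ hf =>
    simp only [ContinuousMap.smul_apply, smul_eq_mul]
    rw [integral_const_mul]
    refine (hf.const_mul a).congr fun T => ?_
    rw [intervalIntegral.integral_const_mul]
    ring

/-- A continuous function vanishing along a half-orbit has integral zero. -/
lemma integral_eq_zero_of_orbit {ω : Fin 3 → ℝ} (hmin : LinearIndependent ℚ ω)
    (x : UnitAddTorus (Fin 3)) (f : C(UnitAddTorus (Fin 3), ℂ))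
    (hf : ∀ t : ℝ, 0 < t → f (x + torusFlow ω t) = 0) :
    ∫ y, f y ∂torusMeasure = 0 := by
  rw [← norm_le_zero_iff]
  refine le_of_forall_pos_le_add fun ε hε => ?_
  have hmem : f ∈ (Submodule.span ℂ (Set.range (mFourier (d := Fin 3)))).topologicalClosure := by
    rw [span_mFourier_closure_eq_top]; trivial
  obtain ⟨g, hg, hfg⟩ := Metric.mem_closure_iff.1 hmem (ε / 2) (half_pos hε)
  have hpt : ∀ y, ‖f y - g y‖ ≤ ε / 2 := fun y => by
    rw [← dist_eq_norm]; exact (ContinuousMap.dist_apply_le_dist y).trans hfg.le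
  have h1 : ‖∫ y, g y ∂torusMeasure‖ ≤ ε / 2 := by
    refine le_of_tendsto (tendsto_mean_of_mem_span hmin x hg).norm ?_
    filter_upwards [eventually_gt_atTop 0] with T hT
    have hb : ‖∫ t in (0 : ℝ)..T, g (x + torusFlow ω t)‖ ≤ ε / 2 * |T - 0| := by
      refine intervalIntegral.norm_integral_le_of_norm_le_const fun t ht => ?_
      rw [Set.uIoc_of_le hT.le] at ht
      have := hpt (x + torusFlow ω t)
      rwa [hf t ht.1, zero_sub, norm_neg] at this
    rw [sub_zero, abs_of_pos hT] at hb
    rw [norm_mul, norm_inv, Complex.norm_real, Real.norm_of_nonneg hT.le, inv_mul_le_iff₀ hT]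
    linarith
  have h2 : ‖∫ y, (f y - g y) ∂torusMeasure‖ ≤ ε / 2 := by
    simpa using norm_integral_le_of_norm_le_const (μ := torusMeasure) (Eventually.of_forall hpt)
  rw [integral_sub (integrable_torus f) (integrable_torus g)] at h2
  have h3 := norm_sub_norm_le (∫ y, f y ∂torusMeasure) (∫ y, g y ∂torusMeasure)
  linarith

/-- Half-orbits of the flow are dense in the torus. -/
lemma exists_torusFlow_near {ω : Fin 3 → ℝ} (hmin : LinearIndependent ℚ ω)
    (x c : UnitAddTorus (Fin 3)) {ε : ℝ} (hε : 0 < ε) :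
    ∃ t : ℝ, 0 < t ∧ dist (x + torusFlow ω t) c < ε := by
  by_contra! hcon
  let f : UnitAddTorus (Fin 3) → ℝ := fun y => max 0 (ε - dist y c)
  have hfc : Continuous f := by fun_prop
  have hpos : 0 < ∫ y, f y ∂torusMeasure := by
    refine hfc.integral_pos_of_hasCompactSupport_nonneg_nonzero (x := c)
      (HasCompactSupport.of_compactSpace _) (fun y => le_max_left _ _) ?_
    simp [f, hε.le, hε.ne']
  have h0 := integral_eq_zero_of_orbit hmin x ⟨fun y => (f y : ℂ), by fun_prop⟩ (by
    intro t ht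
    simpa [f] using hcon t ht)
  simp only [ContinuousMap.coe_mk, integral_complex_ofReal] at h0
  exact hpos.ne' (by exact_mod_cast h0)

/-- Kronecker density, lifted to `ℝ³`. -/
lemma exists_shift {ω : Fin 3 → ℝ} (hmin : LinearIndependent ℚ ω)
    (m m' : Fin 3 → ℝ) {ε : ℝ} (hε : 0 < ε) :
    ∃ D : ℝ, 0 < D ∧ ∃ z : Fin 3 → ℤ, ∀ i, |m' i + D * ω i - m i - z i| < ε := by
  obtain ⟨t, ht, hd⟩ := exists_torusFlow_near hmin (fun i => ((m' i : ℝ) : UnitAddCircle))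
    (fun i => ((m i : ℝ) : UnitAddCircle)) hε
  refine ⟨t, ht, fun i => round (m' i + t * ω i - m i), fun i => ?_⟩
  have := (dist_pi_lt_iff hε).1 hd i
  rw [dist_eq_norm] at this
  rw [← UnitAddCircle.norm_eq]
  exact this

/-! ### Stability of finite words -/

lemma exists_small_gap {t : ℕ → ℝ} (ht : StrictMono t) (h0 : 0 < t 0) (N : ℕ) :
    ∃ δ > 0, 2 * δ < t 0 ∧ ∀ l ≤ N, 2 * δ < t (l + 1) - t l := by
  induction N with
  | zero =>
    have := ht (Nat.lt_succ_self 0)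
    have hp : 0 < min (t 0) (t 1 - t 0) := lt_min h0 (by simpa using this)
    refine ⟨min (t 0) (t 1 - t 0) / 3, by linarith, ?_, ?_⟩
    · linarith [min_le_left (t 0) (t 1 - t 0)]
    · intro l hl
      obtain rfl : l = 0 := by omega
      simp only [zero_add]
      linarith [min_le_right (t 0) (t 1 - t 0)]
  | succ N ih =>
    obtain ⟨δ, hδ, h1, h2⟩ := ih
    have hg : 0 < t (N + 1 + 1) - t (N + 1) := sub_pos.2 (ht (Nat.lt_succ_self _))
    refine ⟨min δ ((t (N + 1 + 1) - t (N + 1)) / 3), lt_min hδ (by linarith), ?_, ?_⟩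
    · linarith [min_le_left δ ((t (N + 1 + 1) - t (N + 1)) / 3)]
    · intro l hl
      rcases Nat.lt_or_ge N l with h | h
      · obtain rfl : l = N + 1 := by omega
        linarith [min_le_right δ ((t (N + 1 + 1) - t (N + 1)) / 3)]
      · linarith [h2 l h, min_le_left δ ((t (N + 1 + 1) - t (N + 1)) / 3)]

/-- Shifts `e i` of size at most `δ` under which the crossings of coordinate `i` by the orbit of `m`
correspond exactly to those by the orbit of `m'`, after a delay `D`. -/
lemma exists_time_shift {ω : Fin 3 → ℝ} (hpos : ∀ i, 0 < ω i) (hmin : LinearIndependent ℚ ω)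
    (m m' : Fin 3 → ℝ) {δ : ℝ} (hδ : 0 < δ) :
    ∃ D : ℝ, 0 < D ∧ ∃ e : Fin 3 → ℝ, (∀ i, |e i| ≤ δ) ∧
      ∀ i r, crossingAt m' ω (r + D + e i) i ↔ crossingAt m ω r i := by
  obtain ⟨w, hw, hwω⟩ : ∃ w : ℝ, 0 < w ∧ ∀ i, w ≤ ω i := by
    obtain ⟨i₀, hi₀⟩ := Finite.exists_min ω
    exact ⟨ω i₀, hpos _, hi₀⟩
  obtain ⟨D, hD, z, hz⟩ := exists_shift hmin m m' (mul_pos hδ hw)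
  refine ⟨D, hD, fun i => -(m' i + D * ω i - m i - z i) / ω i, fun i => ?_, fun i r => ?_⟩
  · rw [abs_div, abs_neg, abs_of_pos (hpos i), div_le_iff₀ (hpos i)]
    exact (hz i).le.trans (mul_le_mul_of_nonneg_left (hwω i) hδ.le)
  · have key : m' i + (r + D + -(m' i + D * ω i - m i - z i) / ω i) * ω i
        = m i + r * ω i + z i := by
      have := (hpos i).ne'
      field_simp
      ring
    constructor
    · rintro ⟨k, hk⟩
      refine ⟨k - z i, ?_⟩
      rw [key] at hk
      push_cast
      linarith
    · rintro ⟨k, hk⟩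
      refine ⟨k + z i, ?_⟩
      rw [key, hk]
      push_cast
      ring

/-- Every prefix of the word of `m` occurs in the word of `m'`. -/
lemma prefix_appears {ω : Fin 3 → ℝ} (hpos : ∀ i, 0 < ω i) (hmin : LinearIndependent ℚ ω)
    {m m' : Fin 3 → ℝ} {u u' : ℕ → Fin 3} (hm : Admissible m ω) (hu : IsCuttingSeq m ω u)
    (hm' : Admissible m' ω) (hu' : IsCuttingSeq m' ω u') (N : ℕ) :
    ∃ k, ∀ j ≤ N, u' (k + j) = u j := by
  obtain ⟨t, tmono, tpos, tcross, tlet⟩ := hu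
  obtain ⟨t', tmono', tpos', tcross', tlet'⟩ := hu'
  obtain ⟨δ, hδ, hδ0, hδgap⟩ := exists_small_gap tmono (tpos 0) (N + 1)
  obtain ⟨D, hD, e, he, hcross⟩ := exists_time_shift hpos hmin m m' hδ
  have he1 : ∀ i, -δ ≤ e i := fun i => (abs_le.1 (he i)).1
  have he2 : ∀ i, e i ≤ δ := fun i => (abs_le.1 (he i)).2
  -- the crossing time of `m'` corresponding to the `j`-th crossing of `m`
  set τ : ℕ → ℝ := fun j => t j + D + e (u j) with hτ
  have hτcross : ∀ j, crossingAt m' ω (τ j) (u j) := fun j => (hcross _ _).2 (tlet j)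
  have hτpos : ∀ j, 0 < τ j := fun j => by
    have h1 := tmono.monotone (Nat.zero_le j)
    have h2 := he1 (u j)
    simp only [hτ]
    linarith
  have hτmono : ∀ j ≤ N + 1, τ j < τ (j + 1) := fun j hj => by
    have := hδgap j hj
    simp only [hτ]
    linarith [he2 (u j), he1 (u (j + 1))]
  have hbetween : ∀ j ≤ N, ∀ σ, τ j < σ → σ < τ (j + 1) → ∀ i, ¬ crossingAt m' ω σ i := by
    intro j hj σ h1 h2 i hi
    have hσ : crossingAt m ω (σ - D - e i) i := by
      rw [← hcross]
      convert hi using 1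
      ring
    simp only [hτ] at h1 h2
    have hlow : t j - 2 * δ < σ - D - e i := by linarith [he1 (u j), he2 i]
    have hhigh : σ - D - e i < t (j + 1) + 2 * δ := by linarith [he2 (u (j + 1)), he1 i]
    have hr0 : 0 < σ - D - e i := by linarith [tmono.monotone (Nat.zero_le j)]
    obtain ⟨p, hp⟩ := (tcross _ hr0).1 ⟨i, hσ⟩
    have hup : u p = i := hm (t p) (tpos p) _ _ (tlet p) (hp ▸ hσ)
    have hpj : p < j + 2 := by
      rw [← tmono.lt_iff_lt, hp]
      have := hδgap (j + 1) (by omega)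
      rw [show j + 2 = j + 1 + 1 from rfl]
      linarith
    have hjp : j ≤ p := by
      rcases j with _ | j
      · exact Nat.zero_le _
      · have := hδgap j (by omega)
        have : t j < t p := by rw [hp]; linarith
        exact tmono.lt_iff_lt.1 this
    have hpcases : p = j ∨ p = j + 1 := by omega
    rcases hpcases with rfl | rfl
    · rw [hup] at h1; linarith
    · rw [hup] at h2; linarith
  obtain ⟨k, hk⟩ := (tcross' (τ 0) (hτpos 0)).1 ⟨_, hτcross 0⟩
  have hind : ∀ j ≤ N, t' (k + j) = τ j := by
    intro j
    induction j with
    | zero => intro _; exact hk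
    | succ j ih =>
      intro hj
      have ihj := ih (by omega)
      obtain ⟨l, hl⟩ := (tcross' (τ (j + 1)) (hτpos _)).1 ⟨_, hτcross _⟩
      have h1 : k + j < l := by
        rw [← tmono'.lt_iff_lt, ihj, hl]; exact hτmono j (by omega)
      rcases Nat.eq_or_lt_of_le (Nat.succ_le_of_lt h1) with h | h
      · rw [← hl, ← h]; rfl
      · exfalso
        refine hbetween j (by omega) (t' (k + j + 1)) ?_ ?_ _ (tlet' _)
        · rw [← ihj]; exact tmono' (Nat.lt_succ_self _)
        · rw [← hl]; exact tmono' h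
  refine ⟨k, fun j hj => ?_⟩
  refine hm' (τ j) (hτpos j) _ _ ?_ (hτcross j)
  rw [← hind j hj]
  exact tlet' _

/-- Every factor of the word of `m` is a factor of the word of `m'`. -/
lemma factors_subset {ω : Fin 3 → ℝ} (hpos : ∀ i, 0 < ω i) (hmin : LinearIndependent ℚ ω)
    {m m' : Fin 3 → ℝ} {u u' : ℕ → Fin 3} (hm : Admissible m ω) (hu : IsCuttingSeq m ω u)
    (hm' : Admissible m' ω) (hu' : IsCuttingSeq m' ω u') (n : ℕ) :
    {w : Fin n → Fin 3 | ∃ k : ℕ, ∀ j : Fin n, w j = u (k + (j : ℕ))} ⊆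
      {w : Fin n → Fin 3 | ∃ k : ℕ, ∀ j : Fin n, w j = u' (k + (j : ℕ))} := by
  rintro w ⟨k, hk⟩
  obtain ⟨k', hk'⟩ := prefix_appears hpos hmin hm hu hm' hu' (k + n)
  refine ⟨k' + k, fun j => ?_⟩
  rw [hk j, add_assoc, hk' (k + j) (by omega)]

/-- For a minimal direction, the complexity does not depend on the initial point. -/
theorem stmt11 (ω : Fin 3 → ℝ) (hpos : ∀ i, 0 < ω i)
    (hmin : LinearIndependent ℚ ω) :
    ∀ m m' : Fin 3 → ℝ, ∀ u u' : ℕ → Fin 3,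
      Admissible m ω → IsCuttingSeq m ω u →
      Admissible m' ω → IsCuttingSeq m' ω u' →
      ∀ n : ℕ, complexity u n = complexity u' n := by
  intro m m' u u' hm hu hm' hu' n
  unfold complexity
  rw [(factors_subset hpos hmin hm hu hm' hu' n).antisymm
    (factors_subset hpos hmin hm' hu' hm hu n)]
end

section
/- Let ω = (ω₁,ω₂,ω₃) ∈ ℝ³ with ωᵢ > 0 for each i be a minimal direction (ω₁, ω₂, ω₃ linearly independent over ℚ). Then N(n,ω) ≤ 2 for every integer n ≥ 1. -/
/-!
Let `p` be the start of a generalized diagonal, normalized in `[0,1)³`, and `t` its duration.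
At no positive time are two coordinates `t * ω a`, `t * ω b` integers at once (`not_two_int`), as
`ω a` and `ω b` are rationally independent. Hence exactly two coordinates `i, j` of `p` vanish,
and the endpoint has integer coordinates `k` (the third index) and exactly one of `i, j`, say `i`
(`exists_shape`). In particular `p k = ⌈t * ω k⌉ - t * ω k`, so `p` is determined by `t` and `k`.

Counting crossings coordinate by coordinate (`ncard_crossings`) gives
`n + 1 = ⌊t * ω 0⌋ + ⌊t * ω 1⌋ + ⌊t * ω 2⌋` (`floor_sum`), which is the number of crossings, up to
time `t` included, of the ray issued from the origin. As `t * ω i` is an integer, `t` is itself one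
of the crossing times of that ray, and the count strictly increases from one crossing time to the
next (`floor_sum_lt`). So `n` determines `t`, then `t` determines `i` by independence, and only
the choice of `k ≠ i` is left: two possibilities.
-/

open Filter Topology

/-- Two coordinates of `t • ω` are never integers simultaneously at a positive time. -/
lemma not_two_int {ω : Fin 3 → ℝ} (hpos : ∀ i, 0 < ω i) (hmin : LinearIndependent ℚ ω)
    {t : ℝ} (ht : 0 < t) {i j : Fin 3} (hij : i ≠ j) {a b : ℤ}
    (ha : t * ω i = a) (hb : t * ω j = b) : False := by
  have hp : LinearIndependent ℚ ![ω i, ω j] := by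
    have hinj : Function.Injective ![i, j] := by
      intro x y
      fin_cases x <;> fin_cases y <;> simp [hij, hij.symm]
    have := hmin.comp ![i, j] hinj
    convert this using 1
    ext x
    fin_cases x <;> simp
  rw [LinearIndependent.pair_iff] at hp
  have h0 : (b : ℚ) • ω i + (-a : ℚ) • ω j = 0 := by
    simp only [Rat.smul_def]
    push_cast
    rw [← ha, ← hb]
    ring
  have hb0 := (hp _ _ h0).1
  have : (b : ℝ) = 0 := by exact_mod_cast hb0
  have := mul_pos ht (hpos j)
  linarith

/-- The number of hyperplanes crossed by a segment: coordinate `l` crosses the levels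
`1, …, ⌈p l + t * ω l⌉ - 1`. -/
lemma ncard_crossings {ω : Fin 3 → ℝ} (hpos : ∀ i, 0 < ω i) {p : Fin 3 → ℝ}
    (hp : ∀ i, p i ∈ Set.Ico (0 : ℝ) 1) {t : ℝ} (ht : 0 < t) :
    ((Set.ncard {q : Fin 3 × ℝ | 0 < q.2 ∧ q.2 < t ∧
      ∃ k : ℤ, p q.1 + q.2 * ω q.1 = (k : ℝ)} : ℕ) : ℤ) =
      ∑ l, (⌈p l + t * ω l⌉ - 1) := by
  let F : Finset (Σ _ : Fin 3, ℤ) :=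
    Finset.univ.sigma fun l => Finset.Ioo 0 ⌈p l + t * ω l⌉
  let f : (Σ _ : Fin 3, ℤ) → Fin 3 × ℝ := fun x => (x.1, ((x.2 : ℝ) - p x.1) / ω x.1)
  have hf : Function.Injective f := by
    rintro ⟨l, m⟩ ⟨l', m'⟩ h
    simp only [f, Prod.mk.injEq] at h
    obtain ⟨rfl, h⟩ := h
    rw [div_left_inj' (hpos l).ne'] at h
    have : m = m' := by exact_mod_cast (sub_left_inj.mp h)
    rw [this]
  have himg : {q : Fin 3 × ℝ | 0 < q.2 ∧ q.2 < t ∧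
      ∃ k : ℤ, p q.1 + q.2 * ω q.1 = (k : ℝ)} = f '' (F : Set (Σ _ : Fin 3, ℤ)) := by
    ext ⟨l, s⟩
    have hw := hpos l
    obtain ⟨h0, h1⟩ := hp l
    constructor
    · rintro ⟨hs, hst, m, hm⟩
      simp only at hs hst hm
      refine ⟨⟨l, m⟩, ?_, ?_⟩
      · simp only [F, Finset.coe_sigma, Finset.coe_univ, Set.mem_sigma_iff, Set.mem_univ, true_and,
          Finset.coe_Ioo, Set.mem_Ioo, Int.lt_ceil]
        refine ⟨?_, ?_⟩
        · have := mul_pos hs hw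
          have : (0 : ℝ) < m := by linarith
          exact_mod_cast this
        · rw [← hm]
          have := mul_lt_mul_of_pos_right hst hw
          linarith
      · simp only [f, Prod.mk.injEq, true_and]
        rw [div_eq_iff hw.ne']
        linarith
    · rintro ⟨⟨l', m⟩, hm, h⟩
      simp only [f, Prod.mk.injEq] at h
      obtain ⟨rfl, rfl⟩ := h
      simp only [F, Finset.coe_sigma, Finset.coe_univ, Set.mem_sigma_iff, Set.mem_univ, true_and,
          Finset.coe_Ioo, Set.mem_Ioo, Int.lt_ceil] at hm
      have hm1 : (1 : ℝ) ≤ m := by exact_mod_cast hm.1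
      refine ⟨?_, ?_, m, ?_⟩
      · apply div_pos _ hw
        linarith
      · simp only
        rw [div_lt_iff₀ hw]
        linarith [hm.2]
      · simp only
        rw [div_mul_cancel₀ _ hw.ne']
        ring
  rw [himg, Set.ncard_image_of_injective _ hf, Set.ncard_coe_finset, Finset.card_sigma]
  push_cast
  refine Finset.sum_congr rfl fun l _ => ?_
  have hc : 0 < ⌈p l + t * ω l⌉ := by
    rw [Int.ceil_pos]
    have := mul_pos ht (hpos l)
    linarith [(hp l).1]
  rw [Int.card_Ioo, Int.toNat_of_nonneg (by omega)]
  ring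

/-- If `Z` and `E` each hold at two indices or more, but never both at the same two indices, then
`Z` holds at `i, j` and `E` at `i, k` for some enumeration `i, j, k` of the three indices. It is
used with `Z` the vanishing coordinates of the start and `E` the integer ones of the end. -/
lemma exists_distinct {Z E : Fin 3 → Prop}
    (h : ∀ a b, a ≠ b → Z a → Z b → E a → E b → False)
    (hZ : ∃ a b, a ≠ b ∧ Z a ∧ Z b) (hE : ∃ a b, a ≠ b ∧ E a ∧ E b) :
    ∃ i j k, i ≠ j ∧ i ≠ k ∧ j ≠ k ∧ Z i ∧ Z j ∧ E i ∧ E k := by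
  obtain ⟨a, b, hab, ha, hb⟩ := hZ
  obtain ⟨c, d, hcd, hc, hd⟩ := hE
  by_cases hca : c = a
  · subst hca
    have hdb : b ≠ d := by
      rintro rfl
      exact h _ _ hab ha hb hc hd
    exact ⟨c, b, d, hab, hcd, hdb, ha, hb, hc, hd⟩
  · by_cases hcb : c = b
    · subst hcb
      have hda : a ≠ d := by
        rintro rfl
        exact h _ _ hab ha hb hd hc
      exact ⟨c, a, d, hab.symm, hcd, hda, hb, ha, hc, hd⟩
    · have hd' : d = a ∨ d = b := by omega
      rcases hd' with rfl | rfl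
      · exact ⟨d, b, c, hab, hcd.symm, Ne.symm hcb, ha, hb, hd, hc⟩
      · exact ⟨d, a, c, hab.symm, hcd.symm, Ne.symm hca, hb, ha, hd, hc⟩

/-- The shape of a generalized diagonal: `p` lies on the edge of direction `k`, and the
endpoint has integer coordinates `i` and `k`. -/
lemma exists_shape {ω : Fin 3 → ℝ} (hpos : ∀ i, 0 < ω i) (hmin : LinearIndependent ℚ ω)
    {p : Fin 3 → ℝ} (hp : ∀ i, p i ∈ Set.Ico (0 : ℝ) 1) {t : ℝ} (ht : 0 < t)
    (h1 : IsCornerPt p) (h2 : IsCornerPt (fun i => p i + t * ω i)) :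
    ∃ i j k : Fin 3, i ≠ j ∧ i ≠ k ∧ j ≠ k ∧ p i = 0 ∧ p j = 0 ∧ 0 < p k ∧
      (∃ a : ℤ, t * ω i = a) ∧ (∃ b : ℤ, p k + t * ω k = b) := by
  have hz : ∀ a, (∃ m : ℤ, p a = m) → p a = 0 := by
    rintro a ⟨m, hm⟩
    obtain ⟨h0, h1⟩ := hp a
    rw [hm] at h0 h1 ⊢
    have h0' : 0 ≤ m := by exact_mod_cast h0
    have h1' : m < 1 := by exact_mod_cast h1
    have : m = 0 := by omega
    simp [this]
  obtain ⟨i, j, k, hij, hik, hjk, hi, hj, ⟨a, ha⟩, ⟨b, hb⟩⟩ :=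
    exists_distinct (Z := fun a => p a = 0) (E := fun a => ∃ m : ℤ, p a + t * ω a = m)
      (by
        rintro a b hab ha hb ⟨m, hm⟩ ⟨m', hm'⟩
        rw [ha, zero_add] at hm
        rw [hb, zero_add] at hm'
        exact not_two_int hpos hmin ht hab hm hm')
      (by
        obtain ⟨a, b, hab, ha, hb⟩ := h1
        exact ⟨a, b, hab, hz a ha, hz b hb⟩)
      h2
  rw [hi, zero_add] at ha
  refine ⟨i, j, k, hij, hik, hjk, hi, hj, ?_, ⟨a, ha⟩, ⟨b, hb⟩⟩
  refine lt_of_le_of_ne (hp k).1 fun h => ?_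
  rw [← h, zero_add] at hb
  exact not_two_int hpos hmin ht hik ha hb

/-- The combinatorial length of a diagonal, in terms of its duration alone. -/
lemma floor_sum {ω : Fin 3 → ℝ} (hpos : ∀ i, 0 < ω i) (hmin : LinearIndependent ℚ ω)
    {p : Fin 3 → ℝ} (hp : ∀ i, p i ∈ Set.Ico (0 : ℝ) 1) {t : ℝ} (ht : 0 < t)
    {i j k : Fin 3} (hij : i ≠ j) (hik : i ≠ k) (hjk : j ≠ k) (hi : p i = 0) (hj : p j = 0)
    (hk : 0 < p k) (ha : ∃ a : ℤ, t * ω i = a) (hb : ∃ b : ℤ, p k + t * ω k = b) :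
    ((Set.ncard {q : Fin 3 × ℝ | 0 < q.2 ∧ q.2 < t ∧
      ∃ k : ℤ, p q.1 + q.2 * ω q.1 = (k : ℝ)} : ℕ) : ℤ) + 1 = ∑ l, ⌊t * ω l⌋ := by
  rw [ncard_crossings hpos hp ht]
  have huniv : (Finset.univ : Finset (Fin 3)) = {i, j, k} := by
    ext x
    simp only [Finset.mem_univ, Finset.mem_insert, Finset.mem_singleton, true_iff]
    omega
  have hsum : ∀ g : Fin 3 → ℤ, ∑ l, g l = g i + (g j + g k) := by
    intro g
    rw [huniv, Finset.sum_insert (by simp [hij, hik]), Finset.sum_insert (by simp [hjk]),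
      Finset.sum_singleton]
  rw [hsum, hsum]
  obtain ⟨a, ha⟩ := ha
  obtain ⟨b, hb⟩ := hb
  have e1 : ⌈p i + t * ω i⌉ = ⌊t * ω i⌋ := by
    rw [hi, zero_add, ha, Int.ceil_intCast, Int.floor_intCast]
  -- `t * ω j` is not an integer, so its ceiling exceeds its floor by one
  have e2 : ⌈p j + t * ω j⌉ = ⌊t * ω j⌋ + 1 := by
    rw [hj, zero_add, Int.ceil_eq_iff]
    push_cast
    refine ⟨?_, (Int.lt_floor_add_one _).le⟩
    rw [add_sub_cancel_right]
    refine lt_of_le_of_ne (Int.floor_le _) fun h => ?_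
    exact not_two_int hpos hmin ht hij ha h.symm
  have e3 : ⌈p k + t * ω k⌉ = ⌊t * ω k⌋ + 1 := by
    have : ⌊t * ω k⌋ = b - 1 := by
      rw [Int.floor_eq_iff]
      push_cast
      constructor <;> linarith [(hp k).2]
    rw [this, hb, Int.ceil_intCast]
    ring
  rw [e1, e2, e3]
  ring

/-- The number of crossings of the ray from the origin jumps at each crossing time `t'`. -/
lemma floor_sum_lt {ω : Fin 3 → ℝ} (hpos : ∀ i, 0 < ω i) {t t' : ℝ} (htt : t < t')
    {i : Fin 3} (ha : ∃ a : ℤ, t' * ω i = a) :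
    ∑ l, ⌊t * ω l⌋ < ∑ l, ⌊t' * ω l⌋ := by
  have hlt : ∀ l, t * ω l < t' * ω l := fun l => mul_lt_mul_of_pos_right htt (hpos l)
  refine Finset.sum_lt_sum (fun l _ => Int.floor_mono (hlt l).le) ⟨i, Finset.mem_univ _, ?_⟩
  obtain ⟨a, ha⟩ := ha
  have := hlt i
  rw [ha] at this ⊢
  rwa [Int.floor_intCast, Int.floor_lt]

/-- For a minimal direction, there are at most two generalized diagonals of any
given combinatorial length. -/
theorem stmt13 (ω : Fin 3 → ℝ) (hpos : ∀ i, 0 < ω i)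
    (hmin : LinearIndependent ℚ ω) :
    ∀ n : ℕ, 1 ≤ n → NDiag ω n ≤ 2 := by
  intro n _
  -- every diagonal of length `n` has the shape below, with `i`, `k` depending on the diagonal
  have key : ∀ (p : Fin 3 → ℝ) (t : ℝ), (∀ i, p i ∈ Set.Ico (0 : ℝ) 1) → 0 < t →
      IsCornerPt p → IsCornerPt (fun i => p i + t * ω i) →
      Set.ncard {q : Fin 3 × ℝ | 0 < q.2 ∧ q.2 < t ∧
        ∃ k : ℤ, p q.1 + q.2 * ω q.1 = (k : ℝ)} = n →
      ∃ i k : Fin 3, i ≠ k ∧ (∃ a : ℤ, t * ω i = a) ∧ (n : ℤ) + 1 = ∑ l, ⌊t * ω l⌋ ∧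
        p = Pi.single k (⌈t * ω k⌉ - t * ω k) := by
    intro p t hp ht h1 h2 hn
    obtain ⟨i, j, k, hij, hik, hjk, hi, hj, hk, ha, hb⟩ := exists_shape hpos hmin hp ht h1 h2
    have hs := floor_sum hpos hmin hp ht hij hik hjk hi hj hk ha hb
    rw [hn] at hs
    refine ⟨i, k, hik, ha, hs, ?_⟩
    obtain ⟨b, hb⟩ := hb
    have hc : ⌈t * ω k⌉ = b := by
      rw [Int.ceil_eq_iff]
      constructor <;> linarith [(hp k).2]
    ext l
    have hl : l = i ∨ l = j ∨ l = k := by omega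
    rcases hl with rfl | rfl | rfl
    · simp [hik, hi]
    · simp [hjk, hj]
    · rw [Pi.single_eq_same, hc]
      linarith
  unfold NDiag
  rcases Set.eq_empty_or_nonempty {pt : (Fin 3 → ℝ) × ℝ |
    (∀ i, pt.1 i ∈ Set.Ico (0 : ℝ) 1) ∧ 0 < pt.2 ∧
    IsCornerPt pt.1 ∧ IsCornerPt (fun i => pt.1 i + pt.2 * ω i) ∧
    Set.ncard {q : Fin 3 × ℝ | 0 < q.2 ∧ q.2 < pt.2 ∧
      ∃ k : ℤ, pt.1 q.1 + q.2 * ω q.1 = (k : ℝ)} = n} with he | ⟨⟨p₀, t₀⟩, hq, ht₀, h1, h2, h3⟩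
  · rw [he]
    simp
  obtain ⟨i₀, _, _, ha₀, hs₀, _⟩ := key p₀ t₀ hq ht₀ h1 h2 h3
  -- all diagonals share `t₀` and `i₀`, so they are parametrized by `k ≠ i₀`
  let T : Finset ((Fin 3 → ℝ) × ℝ) :=
    (Finset.univ.erase i₀).image fun k => (Pi.single k (⌈t₀ * ω k⌉ - t₀ * ω k), t₀)
  have hT : T.card ≤ 2 := by
    refine Finset.card_image_le.trans ?_
    simp
  refine le_trans ?_ hT
  rw [← Set.ncard_coe_finset]
  refine Set.ncard_le_ncard ?_ T.finite_toSet
  rintro ⟨p, t⟩ ⟨g, ht, g1, g2, g3⟩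
  obtain ⟨i, k, hik, ha, hs, hpk⟩ := key p t g ht g1 g2 g3
  have htt : t = t₀ := by
    rcases lt_trichotomy t t₀ with h | h | h
    · have := floor_sum_lt hpos h ha₀
      omega
    · exact h
    · have := floor_sum_lt hpos h ha
      omega
  subst htt
  have hii : i = i₀ := by
    by_contra hne
    obtain ⟨a, ha⟩ := ha
    obtain ⟨b, hb⟩ := ha₀
    exact not_two_int hpos hmin ht₀ hne ha hb
  subst hii
  simp only [T, Finset.coe_image, Set.mem_image, Finset.mem_coe, Finset.mem_erase,
    Finset.mem_univ, and_true]
  exact ⟨k, hik.symm, by rw [hpk]⟩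
end

section
/- Let p : ℕ → ℕ be a function, set s(n) = p(n+1) − p(n) and d(n) = s(n+1) − s(n), and suppose d(n) ∈ {0,1,2} for all n. Suppose furthermore that the values 0, 1, 2 occur in the sequence (d(n)) with frequencies l, m, q respectively, i.e. (1/N)·card{n < N : d(n) = j} converges as N → ∞ to l for j = 0, to m for j = 1, and to q for j = 2. Then p(n)/n² → (m + 2q)/2 as n → ∞. -/
/-!
Telescoping the second difference gives `s(n) = s(0) + #{k < n : d(k) = 1} + 2 #{k < n : d(k) = 2}`
(`firstDiff_eq`), so `s(n)/n → m + 2q`. A Stolz–Cesàro step (`tendsto_div_sq_of_diff`) then passes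
from `u(n+1) - u(n) ~ c n` to `u(n) ~ (c/2) n²`: compare `u` with `(c/2) n²`, whose difference
sequence is `(c/2)(2n+1)`, and sum the resulting `o(2n+1)` error.
-/

open Filter Topology

/-- Stolz–Cesàro with comparison sequence `n²`. -/
theorem tendsto_div_sq_of_diff (u : ℕ → ℝ) (c : ℝ)
    (h : Tendsto (fun n : ℕ => (u (n + 1) - u n) / (n : ℝ)) atTop (𝓝 c)) :
    Tendsto (fun n : ℕ => u n / (n : ℝ) ^ 2) atTop (𝓝 (c / 2)) := by
  have sum_odd : ∀ n : ℕ, ∑ i ∈ Finset.range n, (2 * (i : ℝ) + 1) = (n : ℝ) ^ 2 := by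
    intro n
    induction n with
    | zero => simp
    | succ k ih => rw [Finset.sum_range_succ, ih]; push_cast; ring
  have sq_top : Tendsto (fun n : ℕ => (n : ℝ) ^ 2) atTop atTop :=
    (tendsto_pow_atTop two_ne_zero).comp tendsto_natCast_atTop_atTop
  have diff_small : (fun n : ℕ => u (n + 1) - u n - c / 2 * (2 * (n : ℝ) + 1))
      =o[atTop] fun n : ℕ => 2 * (n : ℝ) + 1 := by
    rw [Asymptotics.isLittleO_iff_tendsto' (Eventually.of_forall fun n h0 => by
      have : (0 : ℝ) < 2 * (n : ℝ) + 1 := by positivity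
      exact absurd h0 this.ne')]
    have inv_lim : Tendsto (fun n : ℕ => 1 / (n : ℝ)) atTop (𝓝 0) :=
      tendsto_one_div_atTop_nhds_zero_nat
    -- Numerator and denominator are both divided by `n`.
    have key : Tendsto (fun n : ℕ => ((u (n + 1) - u n) / (n : ℝ) - c / 2 * (2 + 1 / (n : ℝ)))
        / (2 + 1 / (n : ℝ))) atTop (𝓝 ((c - c / 2 * (2 + 0)) / (2 + 0))) :=
      (h.sub ((inv_lim.const_add 2).const_mul _)).div (inv_lim.const_add 2) (by norm_num)
    rw [show (c - c / 2 * (2 + 0)) / (2 + 0) = 0 by ring] at key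
    refine key.congr' ?_
    filter_upwards [eventually_gt_atTop 0] with n hn
    have : (0 : ℝ) < n := by exact_mod_cast hn
    field_simp
  have sum_small := diff_small.sum_range (fun n => by positivity)
    (by simpa only [sum_odd] using sq_top)
  have sum_eq : ∀ n : ℕ, ∑ i ∈ Finset.range n, (u (i + 1) - u i - c / 2 * (2 * (i : ℝ) + 1))
      = u n - u 0 - c / 2 * (n : ℝ) ^ 2 := by
    intro n
    rw [Finset.sum_sub_distrib, Finset.sum_range_sub, ← Finset.mul_sum, sum_odd]
  simp only [sum_odd, sum_eq] at sum_small
  have lim := (sum_small.tendsto_div_nhds_zero.add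
    (sq_top.const_div_atTop (u 0))).add_const (c / 2)
  rw [add_zero, zero_add] at lim
  refine lim.congr' ?_
  filter_upwards [eventually_gt_atTop 0] with n hn
  have : (0 : ℝ) < n := by exact_mod_cast hn
  field_simp
  ring

/-- A sequence with increments in `{0, 1, 2}` is its initial value plus the weighted number of
increments equal to `1` and `2`. -/
theorem firstDiff_eq (s : ℕ → ℤ) (hd : ∀ n, s (n + 1) - s n ∈ ({0, 1, 2} : Set ℤ)) (n : ℕ) :
    s n = s 0 + ((Finset.range n).filter (fun k => s (k + 1) - s k = 1)).card
      + 2 * ((Finset.range n).filter (fun k => s (k + 1) - s k = 2)).card := by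
  induction n with
  | zero => simp
  | succ k ih =>
    have hk := hd k
    simp only [Set.mem_insert_iff, Set.mem_singleton_iff] at hk
    rcases hk with h | h | h <;> simp [Finset.range_add_one, Finset.filter_insert, h] <;> linarith

/-- If the second difference `d(n) = s(n+1) - s(n)` of a complexity-like function
takes only the values `0, 1, 2`, with respective frequencies `l, m, q`, then
`p(n)/n² → (m + 2q)/2`. -/
theorem stmt16 (p : ℕ → ℕ) (l m q : ℝ)
    (hd : ∀ n : ℕ,
      (((p (n + 2) : ℤ) - p (n + 1)) - ((p (n + 1) : ℤ) - p n)) ∈ ({0, 1, 2} : Set ℤ))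
    (hl : Tendsto (fun N : ℕ =>
        (((Finset.range N).filter (fun n =>
          ((p (n + 2) : ℤ) - p (n + 1)) - ((p (n + 1) : ℤ) - p n) = 0)).card : ℝ) / (N : ℝ))
        atTop (𝓝 l))
    (hm : Tendsto (fun N : ℕ =>
        (((Finset.range N).filter (fun n =>
          ((p (n + 2) : ℤ) - p (n + 1)) - ((p (n + 1) : ℤ) - p n) = 1)).card : ℝ) / (N : ℝ))
        atTop (𝓝 m))
    (hq : Tendsto (fun N : ℕ =>
        (((Finset.range N).filter (fun n =>
          ((p (n + 2) : ℤ) - p (n + 1)) - ((p (n + 1) : ℤ) - p n) = 2)).card : ℝ) / (N : ℝ))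
        atTop (𝓝 q)) :
    Tendsto (fun n : ℕ => (p n : ℝ) / (n : ℝ) ^ 2) atTop (𝓝 ((m + 2 * q) / 2)) := by
  refine tendsto_div_sq_of_diff (fun n => (p n : ℝ)) (m + 2 * q) ?_
  have lim := ((tendsto_const_div_atTop_nhds_zero_nat ((p 1 : ℝ) - p 0)).add hm).add
    (hq.const_mul 2)
  rw [zero_add] at lim
  refine lim.congr fun n => ?_
  have formula := firstDiff_eq (fun n => (p (n + 1) : ℤ) - p n) hd n
  have formula_real := congrArg (Int.cast : ℤ → ℝ) formula
  push_cast at formula_real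
  rw [formula_real]
  ring
end

section
/- Let a, b, c be integers, not all zero, let d ∈ ℝ, and let P = {(X,Y,Z) ∈ ℝ³ : c·X + a·Y + b·Z = d} be the corresponding plane. Then the collection of subsets of the unit cube obtained by intersecting integer translates of P with [0,1]³, namely {(P − v) ∩ [0,1]³ : v ∈ ℤ³}, is a finite collection; equivalently, the image of P under the quotient map π : ℝ³ → ℝ³/ℤ³ is a finite union of (projected) polygons. -/
/-!
The slice of the unit cube by `P - v` depends on `v` only through the integer
`n = c v₀ + a v₁ + b v₂`: it is cut out by `c x₀ + a x₁ + b x₂ + n = d`. On the unit cube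
`|c x₀ + a x₁ + b x₂| ≤ |a| + |b| + |c|`, so a nonempty slice forces `n` into a bounded
interval of integers. Hence only finitely many nonempty slices occur, besides possibly `∅`.
-/

open Filter Topology

/-- A linear monomial on the unit interval is bounded by the size of its coefficient. -/
lemma abs_mul_le_of_mem_Icc (k t : ℝ) (ht : t ∈ Set.Icc (0 : ℝ) 1) : |k * t| ≤ |k| := by
  rw [abs_mul, abs_of_nonneg ht.1]
  exact mul_le_of_le_one_right (abs_nonneg k) ht.2

/-- The projection to the torus `ℝ³/ℤ³` of a rational plane `cX + aY + bZ = d` is a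
finite union of polygons: the collection of intersections of integer translates of
the plane with the unit cube is finite. -/
theorem stmt19 (a b c : ℤ) (habc : ¬ (a = 0 ∧ b = 0 ∧ c = 0)) (d : ℝ) :
    Set.Finite {S : Set (Fin 3 → ℝ) | ∃ v : Fin 3 → ℤ,
      S = {x : Fin 3 → ℝ | (∀ i, x i ∈ Set.Icc (0 : ℝ) 1) ∧
        (c : ℝ) * (x 0 + (v 0 : ℝ)) + (a : ℝ) * (x 1 + (v 1 : ℝ)) +
          (b : ℝ) * (x 2 + (v 2 : ℝ)) = d}} := by
  set M : ℝ := |(a : ℝ)| + |(b : ℝ)| + |(c : ℝ)| with hM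
  let F : ℤ → Set (Fin 3 → ℝ) := fun n =>
    {x | (∀ i, x i ∈ Set.Icc (0 : ℝ) 1) ∧
      (c : ℝ) * x 0 + (a : ℝ) * x 1 + (b : ℝ) * x 2 + (n : ℝ) = d}
  refine (((Set.finite_Icc ⌈d - M⌉ ⌊d + M⌋).image F).insert ∅).subset ?_
  rintro S ⟨v, rfl⟩
  rw [Set.mem_insert_iff, or_iff_not_imp_left]
  intro hne
  obtain ⟨x, hx, hxd⟩ := Set.nonempty_iff_ne_empty.mpr hne
  refine ⟨c * v 0 + a * v 1 + b * v 2, ?_, ?_⟩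
  · have h0 := abs_le.mp (abs_mul_le_of_mem_Icc c (x 0) (hx 0))
    have h1 := abs_le.mp (abs_mul_le_of_mem_Icc a (x 1) (hx 1))
    have h2 := abs_le.mp (abs_mul_le_of_mem_Icc b (x 2) (hx 2))
    rw [Set.mem_Icc, Int.ceil_le, Int.le_floor]
    push_cast
    constructor <;> linarith [h0.1, h0.2, h1.1, h1.2, h2.1, h2.2]
  · ext y
    simp only [F, Set.mem_setOf_eq]
    push_cast
    refine and_congr_right fun _ => ?_
    constructor <;> intro h <;> linarith
end
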